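/- arXiv:1802.02602 — 3 statements merged into one kernel-verified Lean document; each statement's English description precedes it below -/
import Mathlib

section
/- Let a < b be reals, ω a weight on [a,b], and k, k' ∈ K_ω conjugate kernels. Let f ∈ L¹([a,b];ℝ) be such that there exist c ∈ ℝ and μ ∈ L¹([a,b];ℝ) with (I_a^{k'} f)(x) = c + ∫_a^x μ(t) dt for a.e. x ∈ [a,b]. Then, writing Δ(x) = δ_{k,𝟙}(x,a) = ∫_a^x k(x,z) ω(z) dz, for a.e. x ∈ [a,b] the function Δ is differentiable at x and I_a^k(ω⁻¹ μ)(x) = f(x) − c · (1/ω(x)) · Δ'(x); that is, I_a^k(D_a^{k'} f)(x) = f(x) − (I_a^{k'} f)(a) · (1/ω(x)) · (d/dx) δ_{k,𝟙}(x,a) for a.e. x ∈ [a,b]. -/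
open MeasureTheory Set

noncomputable section

/-- weight function on `[a,b]`: measurable, positive, with `ω` and `ω⁻¹` essentially bounded. -/
def IsWeight (a b : ℝ) (ω : ℝ → ℝ) : Prop :=
  Measurable ω ∧ (∀ x ∈ Icc a b, 0 < ω x) ∧
  essSup (fun x => ENNReal.ofReal (ω x)) (volume.restrict (Icc a b)) < ⊤ ∧
  essSup (fun x => ENNReal.ofReal (ω x)⁻¹) (volume.restrict (Icc a b)) < ⊤

/-- `F_k(y) = ∫_y^b k(x,y) ω(x) dx`. -/
def Fker (b : ℝ) (ω : ℝ → ℝ) (k : ℝ → ℝ → ℝ) (y : ℝ) : ℝ :=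
  ∫ x in y..b, k x y * ω x

/-- `G_k(y) = ∫_a^y k(y,x) ω(x) dx`. -/
def Gker (a : ℝ) (ω : ℝ → ℝ) (k : ℝ → ℝ → ℝ) (y : ℝ) : ℝ :=
  ∫ x in a..y, k y x * ω x

/-- membership in the kernel class `K_ω`. -/
def MemK (a b : ℝ) (ω : ℝ → ℝ) (k : ℝ → ℝ → ℝ) : Prop :=
  Measurable (Function.uncurry k) ∧
  (∀ x y : ℝ, a ≤ y → y < x → x ≤ b → 0 < k x y) ∧
  essSup (fun y => ENNReal.ofReal (Fker b ω k y)) (volume.restrict (Ico a b)) < ⊤ ∧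
  essSup (fun y => ENNReal.ofReal (Gker a ω k y)) (volume.restrict (Ioc a b)) < ⊤

/-- `δ_{k₁,k₂}(x,y) = ∫_y^x k₁(x,z) k₂(z,y) ω(z) dz`. -/
def deltaK (ω : ℝ → ℝ) (k₁ k₂ : ℝ → ℝ → ℝ) (x y : ℝ) : ℝ :=
  ∫ z in y..x, k₁ x z * k₂ z y * ω z

/-- `k₁ R k₂` : `0 < δ_{k₁,k₂}(x,y) < ∞` on `Ω` (finiteness as interval integrability). -/
def relR (a b : ℝ) (ω : ℝ → ℝ) (k₁ k₂ : ℝ → ℝ → ℝ) : Prop :=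
  ∀ x y : ℝ, a ≤ y → y < x → x ≤ b →
    0 < deltaK ω k₁ k₂ x y ∧
    IntervalIntegrable (fun z => k₁ x z * k₂ z y * ω z) volume y x

/-- conjugate kernels. -/
def Conjugate (a b : ℝ) (ω : ℝ → ℝ) (k k' : ℝ → ℝ → ℝ) : Prop :=
  ∀ x y : ℝ, a ≤ y → y < x → x ≤ b →
    deltaK ω k k' x y = 1 ∧ deltaK ω k' k x y = 1

/-- left-sided `k`-integral. -/
def Ia (a : ℝ) (ω : ℝ → ℝ) (k : ℝ → ℝ → ℝ) (f : ℝ → ℝ) (x : ℝ) : ℝ :=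
  ∫ y in a..x, k x y * f y * ω y

/-- right-sided `k`-integral. -/
def Ib (b : ℝ) (ω : ℝ → ℝ) (k : ℝ → ℝ → ℝ) (f : ℝ → ℝ) (x : ℝ) : ℝ :=
  ∫ y in x..b, k y x * f y * ω y

section Helpers

open scoped ENNReal

/-- restriction of a kernel to `Ω`. -/
def cutK (a b : ℝ) (k : ℝ → ℝ → ℝ) (x y : ℝ) : ℝ :=
  if a ≤ y ∧ y < x ∧ x ≤ b then k x y else 0

/-- the measure `ω dx` on `[a,b]`. -/
def wMeas (a b : ℝ) (ω : ℝ → ℝ) : Measure ℝ :=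
  (volume.restrict (Icc a b)).withDensity (fun x => ENNReal.ofReal (ω x))

lemma cutK_measurable {a b : ℝ} {k : ℝ → ℝ → ℝ} (hk : Measurable (Function.uncurry k)) :
    Measurable (Function.uncurry (cutK a b k)) := by
  have hs : MeasurableSet {p : ℝ × ℝ | a ≤ p.2 ∧ p.2 < p.1 ∧ p.1 ≤ b} := by
    apply MeasurableSet.inter
    · exact measurableSet_le measurable_const measurable_snd
    · apply MeasurableSet.inter
      · exact measurableSet_lt measurable_snd measurable_fst
      · exact measurableSet_le measurable_fst measurable_const
  exact Measurable.ite hs hk measurable_const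

lemma cutK_nonneg {a b : ℝ} {k : ℝ → ℝ → ℝ}
    (hk : ∀ x y : ℝ, a ≤ y → y < x → x ≤ b → 0 < k x y) (x y : ℝ) : 0 ≤ cutK a b k x y := by
  unfold cutK
  split_ifs with h
  · exact (hk x y h.1 h.2.1 h.2.2).le
  · exact le_rfl

/-- Fubini for a nonnegative iterated kernel with bounded total mass. -/
lemma fub {ν : Measure ℝ} [SFinite ν] {A : ℝ → ℝ} {B : ℝ → ℝ → ℝ}
    (hA : Measurable A) (hB : Measurable (Function.uncurry B))
    (hA0 : ∀ z, 0 ≤ A z) (hB0 : ∀ z y, 0 ≤ B z y) (C : ℝ → ℝ≥0∞)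
    (hC : ∀ y, ∫⁻ z, ENNReal.ofReal (A z * B z y) ∂ν = C y) (R : ℝ≥0∞) (hR : R ≠ ⊤)
    (hCR : ∀ y, C y ≤ R) (g : ℝ → ℝ) (hg : Integrable g ν) :
    Integrable (fun z => A z * ∫ y, B z y * g y ∂ν) ν ∧
    ∫ z, A z * ∫ y, B z y * g y ∂ν ∂ν = ∫ y, (C y).toReal * g y ∂ν := by
  have hAB : Measurable (fun p : ℝ × ℝ => A p.1 * B p.1 p.2) :=
    (hA.comp measurable_fst).mul hB
  have hmeas : AEStronglyMeasurable (fun p : ℝ × ℝ => A p.1 * B p.1 p.2 * g p.2) (ν.prod ν) :=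
    hAB.aestronglyMeasurable.mul hg.1.comp_snd
  have hint : Integrable (fun p : ℝ × ℝ => A p.1 * B p.1 p.2 * g p.2) (ν.prod ν) := by
    refine ⟨hmeas, ?_⟩
    unfold HasFiniteIntegral
    rw [lintegral_prod_symm _ hmeas.enorm]
    have h1 : ∀ y, ∫⁻ z, ‖A z * B z y * g y‖ₑ ∂ν = C y * ‖g y‖ₑ := by
      intro y
      have h2 : ∀ z, ‖A z * B z y * g y‖ₑ = ENNReal.ofReal (A z * B z y) * ‖g y‖ₑ := by
        intro z
        rw [enorm_mul, Real.enorm_of_nonneg (mul_nonneg (hA0 z) (hB0 z y))]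
      simp only [h2]
      rw [lintegral_mul_const, hC]
      exact ENNReal.measurable_ofReal.comp (hAB.comp (measurable_id.prodMk measurable_const))
    simp only [h1]
    calc ∫⁻ y, C y * ‖g y‖ₑ ∂ν ≤ ∫⁻ y, R * ‖g y‖ₑ ∂ν :=
          lintegral_mono fun y => by gcongr; exact hCR y
      _ = R * ∫⁻ y, ‖g y‖ₑ ∂ν := lintegral_const_mul' _ _ hR
      _ < ⊤ := ENNReal.mul_lt_top hR.lt_top hg.2
  have e1 : ∀ z, A z * ∫ y, B z y * g y ∂ν = ∫ y, A z * B z y * g y ∂ν := by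
    intro z
    rw [← integral_const_mul]
    simp only [mul_assoc]
  simp only [e1]
  refine ⟨hint.integral_prod_left, ?_⟩
  rw [integral_integral_swap (f := fun z y => A z * B z y * g y) hint]
  congr 1
  ext y
  rw [integral_mul_const, integral_eq_lintegral_of_nonneg_ae, hC]
  · exact Filter.Eventually.of_forall fun z => mul_nonneg (hA0 z) (hB0 z y)
  · exact (hAB.comp (measurable_id.prodMk measurable_const)).aestronglyMeasurable

/-- Tonelli for a composition of three kernels. -/
lemma tonelli3 {ν : Measure ℝ} [SFinite ν] {A D : ℝ → ℝ} {B : ℝ → ℝ → ℝ} {P Q : ℝ → ℝ≥0∞}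
    (hA : Measurable A) (hB : Measurable (Function.uncurry B))
    (hD : Measurable D)
    (hA0 : ∀ z, 0 ≤ A z) (hD0 : ∀ z, 0 ≤ D z)
    (hAB : ∀ w, ∫⁻ z, ENNReal.ofReal (A z * B z w) ∂ν = P w)
    (hBD : ∀ z, ∫⁻ w, ENNReal.ofReal (B z w * D w) ∂ν = Q z) :
    ∫⁻ z, ENNReal.ofReal (A z) * Q z ∂ν = ∫⁻ w, P w * ENNReal.ofReal (D w) ∂ν := by
  have h1 : ∀ z, ENNReal.ofReal (A z) * Q z
      = ∫⁻ w, ENNReal.ofReal (A z * B z w * D w) ∂ν := by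
    intro z
    rw [← hBD, ← lintegral_const_mul' _ _ ENNReal.ofReal_ne_top]
    congr 1; ext w
    rw [← ENNReal.ofReal_mul (hA0 z), mul_assoc]
  have h2 : ∀ w, P w * ENNReal.ofReal (D w)
      = ∫⁻ z, ENNReal.ofReal (A z * B z w * D w) ∂ν := by
    intro w
    rw [← hAB, ← lintegral_mul_const' _ _ ENNReal.ofReal_ne_top]
    congr 1; ext z
    rw [← ENNReal.ofReal_mul' (hD0 w)]
  simp only [h1, h2]
  refine lintegral_lintegral_swap (f := fun z w => ENNReal.ofReal (A z * B z w * D w)) ?_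
  apply Measurable.aemeasurable
  refine ENNReal.measurable_ofReal.comp ?_
  exact ((hA.comp measurable_fst).mul hB).mul (hD.comp measurable_snd)

lemma weight_integrable {a b : ℝ} {ω : ℝ → ℝ} (hω : IsWeight a b ω) {f : ℝ → ℝ}
    (hf : IntegrableOn f (Icc a b)) : IntegrableOn (fun x => ω x * f x) (Icc a b) := by
  obtain ⟨hm, hp, hb, -⟩ := hω
  refine Integrable.bdd_mul (c := (essSup (fun x => ENNReal.ofReal (ω x))
    (volume.restrict (Icc a b))).toReal) hf hm.aestronglyMeasurable ?_
  filter_upwards [ENNReal.ae_le_essSup (μ := volume.restrict (Icc a b))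
    (fun x => ENNReal.ofReal (ω x)), ae_restrict_mem measurableSet_Icc] with x hx hxm
  rw [Real.norm_of_nonneg (hp x hxm).le]
  exact (ENNReal.ofReal_le_iff_le_toReal hb.ne).1 hx

lemma wMeas_integrable {a b : ℝ} {ω : ℝ → ℝ} (hm : Measurable ω)
    (hp : ∀ x ∈ Icc a b, 0 < ω x) {g : ℝ → ℝ} :
    Integrable g (wMeas a b ω) ↔ IntegrableOn (fun x => ω x * g x) (Icc a b) := by
  unfold wMeas
  rw [integrable_withDensity_iff_integrable_smul' hm.ennreal_ofReal
    (Filter.Eventually.of_forall fun _ => ENNReal.ofReal_lt_top)]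
  refine integrable_congr ?_
  filter_upwards [ae_restrict_mem measurableSet_Icc] with x hx
  rw [ENNReal.toReal_ofReal (hp x hx).le, smul_eq_mul]

lemma wMeas_integral {a b : ℝ} {ω : ℝ → ℝ} (hm : Measurable ω)
    (hp : ∀ x ∈ Icc a b, 0 < ω x) {g : ℝ → ℝ} :
    ∫ x, g x ∂(wMeas a b ω) = ∫ x in Icc a b, ω x * g x := by
  unfold wMeas
  rw [integral_withDensity_eq_integral_toReal_smul hm.ennreal_ofReal
    (Filter.Eventually.of_forall fun _ => ENNReal.ofReal_lt_top)]
  refine integral_congr_ae ?_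
  filter_upwards [ae_restrict_mem measurableSet_Icc] with x hx
  rw [ENNReal.toReal_ofReal (hp x hx).le, smul_eq_mul]

lemma bridge {a b : ℝ} {ω : ℝ → ℝ} (hm : Measurable ω)
    (hp : ∀ x ∈ Icc a b, 0 < ω x) {x y : ℝ} (hay : a ≤ y) (hyx : y ≤ x) (hxb : x ≤ b)
    {ψ φ : ℝ → ℝ} (h1 : ∀ z ∈ Ioo y x, ω z * ψ z = φ z) (h2 : ∀ z, z ∉ Icc y x → ψ z = 0) :
    (∫ z, ψ z ∂(wMeas a b ω) = ∫ z in y..x, φ z) ∧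
    (Integrable ψ (wMeas a b ω) ↔ IntervalIntegrable φ volume y x) := by
  have hsub : Ioc y x ⊆ Icc a b := fun z hz => ⟨hay.trans hz.1.le, hz.2.trans hxb⟩
  have hae : (fun z => ω z * ψ z) =ᵐ[volume.restrict (Icc a b)] indicator (Ioc y x) φ := by
    have n1 : ∀ᵐ z ∂(volume.restrict (Icc a b)), z ≠ y :=
      ae_restrict_of_ae (Measure.ae_ne volume y)
    have n2 : ∀ᵐ z ∂(volume.restrict (Icc a b)), z ≠ x :=
      ae_restrict_of_ae (Measure.ae_ne volume x)
    filter_upwards [n1, n2] with z hz1 hz2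
    by_cases h : z ∈ Ioc y x
    · rw [indicator_of_mem h, h1 z ⟨h.1, lt_of_le_of_ne h.2 hz2⟩]
    · rw [indicator_of_notMem h, h2, mul_zero]
      exact fun h' => h ⟨lt_of_le_of_ne h'.1 (Ne.symm hz1), h'.2⟩
  constructor
  · rw [wMeas_integral hm hp, integral_congr_ae hae, setIntegral_indicator measurableSet_Ioc,
      inter_eq_right.2 hsub, intervalIntegral.integral_of_le hyx]
  · rw [wMeas_integrable hm hp, intervalIntegrable_iff_integrableOn_Ioc_of_le hyx,
      IntegrableOn, integrable_congr hae]
    rw [integrable_indicator_iff measurableSet_Ioc, IntegrableOn,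
      Measure.restrict_restrict measurableSet_Ioc, inter_eq_left.2 hsub, IntegrableOn]

lemma cutK_eq {a b : ℝ} {k : ℝ → ℝ → ℝ} {x y : ℝ} (h1 : a ≤ y) (h2 : y < x) (h3 : x ≤ b) :
    cutK a b k x y = k x y := if_pos ⟨h1, h2, h3⟩

lemma cutK_zero {a b : ℝ} {k : ℝ → ℝ → ℝ} {x y : ℝ} (h : ¬ (a ≤ y ∧ y < x ∧ x ≤ b)) :
    cutK a b k x y = 0 := if_neg h

lemma conv_eq {a b : ℝ} {ω : ℝ → ℝ} (hm : Measurable ω)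
    (hp : ∀ x ∈ Icc a b, 0 < ω x) {k k' : ℝ → ℝ → ℝ}
    (hk : ∀ x y : ℝ, a ≤ y → y < x → x ≤ b → 0 < k x y)
    (hk' : ∀ x y : ℝ, a ≤ y → y < x → x ≤ b → 0 < k' x y)
    (h : ∀ x y : ℝ, a ≤ y → y < x → x ≤ b → deltaK ω k k' x y = 1) (x y : ℝ) :
    ∫⁻ z, ENNReal.ofReal (cutK a b k x z * cutK a b k' z y) ∂(wMeas a b ω)
      = ENNReal.ofReal (cutK a b (fun _ _ => 1) x y) := by
  by_cases hd : a ≤ y ∧ y < x ∧ x ≤ b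
  · obtain ⟨h1, h2, h3⟩ := hd
    have hb := (bridge hm hp h1 h2.le h3
      (ψ := fun z => cutK a b k x z * cutK a b k' z y)
      (φ := fun z => k x z * k' z y * ω z) ?_ ?_).1
    · have hd := h x y h1 h2 h3
      unfold deltaK at hd
      rw [hd] at hb
      rw [cutK_eq h1 h2 h3, ← hb, ofReal_integral_eq_lintegral_ofReal]
      · exact Integrable.of_integral_ne_zero (by rw [hb]; exact one_ne_zero)
      · exact Filter.Eventually.of_forall fun z =>
          mul_nonneg (cutK_nonneg hk _ _) (cutK_nonneg hk' _ _)
    · intro z hz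
      rw [cutK_eq (h1.trans hz.1.le) hz.2 h3, cutK_eq h1 hz.1 (hz.2.le.trans h3)]
      ring
    · intro z hz
      by_cases hz1 : z < y
      · rw [cutK_zero (x := z) (fun h => by linarith [h.2.1]), mul_zero]
      · rw [cutK_zero (y := z) (fun h => hz ⟨not_lt.1 hz1, h.2.1.le⟩), zero_mul]
  · rw [cutK_zero hd, ENNReal.ofReal_zero]
    have : ∀ z, cutK a b k x z * cutK a b k' z y = 0 := by
      intro z
      by_cases hz : a ≤ z ∧ z < x ∧ x ≤ b
      · rw [cutK_zero (x := z) (fun h => hd ⟨h.1, h.2.1.trans hz.2.1, hz.2.2⟩), mul_zero]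
      · rw [cutK_zero (y := z) hz, zero_mul]
    simp [this]

lemma one_pos_dom {a b : ℝ} :
    ∀ x y : ℝ, a ≤ y → y < x → x ≤ b → 0 < (fun _ _ : ℝ => (1 : ℝ)) x y :=
  fun _ _ _ _ _ => one_pos

/-- commutation of `k` with the unit kernel, and finiteness. -/
lemma comm_fin {a b : ℝ} (hab : a < b) {ω : ℝ → ℝ} (hω : IsWeight a b ω)
    {k k' : ℝ → ℝ → ℝ} (hk : MemK a b ω k) (hk' : MemK a b ω k')
    (hconj : Conjugate a b ω k k') :
    (∀ x y, ∫⁻ z, ENNReal.ofReal (cutK a b k x z * cutK a b (fun _ _ => 1) z y) ∂(wMeas a b ω)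
      = ∫⁻ z, ENNReal.ofReal (cutK a b (fun _ _ => 1) x z * cutK a b k z y) ∂(wMeas a b ω)) ∧
    (∀ x, x < b → ∃ R : ℝ≥0∞, R ≠ ⊤ ∧ ∀ y,
      ∫⁻ z, ENNReal.ofReal (cutK a b k x z * cutK a b (fun _ _ => 1) z y) ∂(wMeas a b ω) ≤ R) := by
  obtain ⟨hm, hp, -⟩ := id hω
  have hfin : IsFiniteMeasure (wMeas a b ω) := by
    have h1 : Integrable (fun _ => (1 : ℝ)) (wMeas a b ω) := by
      rw [wMeas_integrable hm hp]
      exact weight_integrable hω (integrable_const (μ := volume.restrict (Icc a b)) (1 : ℝ))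
    exact (integrable_const_iff_isFiniteMeasure one_ne_zero).1 h1
  have hK := cutK_measurable (a := a) (b := b) hk.1
  have hK' := cutK_measurable (a := a) (b := b) hk'.1
  have hT : Measurable (Function.uncurry (cutK a b (fun _ _ => 1))) :=
    cutK_measurable measurable_const
  have pK := cutK_nonneg hk.2.1
  have pK' := cutK_nonneg hk'.2.1
  have pT := cutK_nonneg (one_pos_dom (a := a) (b := b))
  have c1 := conv_eq hm hp hk.2.1 hk'.2.1 (fun x y h1 h2 h3 => (hconj x y h1 h2 h3).1)
  have c2 := conv_eq hm hp hk'.2.1 hk.2.1 (fun x y h1 h2 h3 => (hconj x y h1 h2 h3).2)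
  have hcomm : ∀ x y,
      ∫⁻ z, ENNReal.ofReal (cutK a b k x z * cutK a b (fun _ _ => 1) z y) ∂(wMeas a b ω)
      = ∫⁻ z, ENNReal.ofReal (cutK a b (fun _ _ => 1) x z * cutK a b k z y) ∂(wMeas a b ω) := by
    intro x y
    have := tonelli3 (ν := wMeas a b ω) (hK.of_uncurry_left (x := x)) hK'
      (hK.of_uncurry_right (y := y)) (pK x) (fun z => pK z y) (c1 x) (fun z => c2 z y)
    simp only [← ENNReal.ofReal_mul (pK _ _), ← ENNReal.ofReal_mul (pT _ _)] at this
    exact this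
  refine ⟨hcomm, ?_⟩
  intro x hx
  set M : ℝ → ℝ≥0∞ := fun x =>
    ∫⁻ z, ENNReal.ofReal (cutK a b k x z * cutK a b (fun _ _ => 1) z a) ∂(wMeas a b ω) with hM
  have t2 := tonelli3 (ν := wMeas a b ω) (hK'.of_uncurry_left (x := b)) hK
      (hT.of_uncurry_right (y := a)) (pK' b) (fun z => pT z a) (c2 b) (Q := M) (fun z => rfl)
  have t3 : ∫⁻ z, ENNReal.ofReal (cutK a b k' b z) * M z ∂(wMeas a b ω) ≠ ⊤ := by
    rw [t2]
    have hT1 : ∀ x y, ENNReal.ofReal (cutK a b (fun _ _ => 1) x y) ≤ 1 := by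
      intro x y
      unfold cutK
      split_ifs <;> simp
    refine ne_top_of_le_ne_top (b := ∫⁻ _, 1 ∂(wMeas a b ω)) (by simp) (lintegral_mono fun z => ?_)
    exact mul_le_one' (hT1 _ _) (hT1 _ _)
  have hMm : Measurable M := by
    refine Measurable.lintegral_prod_right' (f := fun p : ℝ × ℝ =>
      ENNReal.ofReal (cutK a b k p.1 p.2 * cutK a b (fun _ _ => 1) p.2 a)) ?_
    exact (hK.mul (hT.comp (measurable_snd.prodMk measurable_const))).ennreal_ofReal
  have t4 := ae_lt_top ((hK'.of_uncurry_left (x := b)).ennreal_ofReal.mul hMm) t3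
  unfold wMeas at t4
  rw [ae_withDensity_iff hm.ennreal_ofReal, ae_restrict_iff' measurableSet_Icc] at t4
  have hne : (volume : Measure ℝ) (Ioo (max a x) b) ≠ 0 := by
    rw [Real.volume_Ioo]
    simpa using ⟨hab, hx⟩
  obtain ⟨z, hz, hzf⟩ := (frequently_ae_mem_iff.2 hne).and_eventually t4 |>.exists
  have hza : a < z := (le_max_left _ _).trans_lt hz.1
  have hzx : x < z := (le_max_right _ _).trans_lt hz.1
  have hzM := hzf ⟨hza.le, hz.2.le⟩
    (by simpa using hp z ⟨hza.le, hz.2.le⟩)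
  have hMz : M z ≠ ⊤ := by
    intro h
    simp only [Pi.mul_apply, h] at hzM
    rw [ENNReal.mul_top] at hzM
    · exact lt_irrefl _ hzM
    · rw [cutK_eq hza.le hz.2 le_rfl]
      simpa using hk'.2.1 b z hza.le hz.2 le_rfl
  refine ⟨M z, hMz, fun y => ?_⟩
  have hMxa : M x ≤ M z := by
    simp only [hM]
    rw [hcomm, hcomm]
    refine lintegral_mono fun w => ENNReal.ofReal_le_ofReal ?_
    refine mul_le_mul_of_nonneg_right ?_ (pK _ _)
    by_cases h : a ≤ w ∧ w < x ∧ x ≤ b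
    · rw [cutK_eq h.1 h.2.1 h.2.2, cutK_eq h.1 (h.2.1.trans hzx) hz.2.le]
    · rw [cutK_zero h]; exact pT _ _
  refine le_trans ?_ hMxa
  refine lintegral_mono fun w => ENNReal.ofReal_le_ofReal ?_
  refine mul_le_mul_of_nonneg_left ?_ (pK _ _)
  by_cases h : a ≤ y ∧ y < w ∧ w ≤ b
  · rw [cutK_eq h.1 h.2.1 h.2.2, cutK_eq le_rfl (h.1.trans_lt h.2.1) h.2.2]
  · rw [cutK_zero h]; exact pT _ _

lemma core {a b : ℝ} (hab : a < b) {ω : ℝ → ℝ} (hω : IsWeight a b ω)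
    {k k' : ℝ → ℝ → ℝ} (hk : MemK a b ω k) (hk' : MemK a b ω k')
    (hconj : Conjugate a b ω k k')
    {f μ : ℝ → ℝ} (hf : IntegrableOn f (Icc a b)) (hμ : IntegrableOn μ (Icc a b))
    (c : ℝ)
    (hrep : ∀ᵐ x ∂(volume.restrict (Icc a b)),
      Ia a ω k' f x = c + ∫ t in a..x, μ t) {x : ℝ} (hax : a < x) (hxb : x < b) :
    IntervalIntegrable (fun z => ω z * cutK a b k z a) volume a x ∧
    IntervalIntegrable (fun z => ω z *
      ∫ y, cutK a b k z y * ((ω y)⁻¹ * μ y) ∂(wMeas a b ω)) volume a x ∧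
    (∫ z in a..x, k x z * ω z) = (∫ z in a..x, ω z * cutK a b k z a) ∧
    (∫ z in a..x, ω z * f z) = c * (∫ z in a..x, ω z * cutK a b k z a) +
      ∫ z in a..x, ω z * ∫ y, cutK a b k z y * ((ω y)⁻¹ * μ y) ∂(wMeas a b ω) := by
  obtain ⟨hm, hp, -⟩ := id hω
  obtain ⟨hcomm, hR⟩ := comm_fin hab hω hk hk' hconj
  obtain ⟨R, hRt, hR⟩ := hR x hxb
  have hsf : SFinite (wMeas a b ω) := by unfold wMeas; infer_instance
  have hK := cutK_measurable (a := a) (b := b) hk.1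
  have hK' := cutK_measurable (a := a) (b := b) hk'.1
  have hT : Measurable (Function.uncurry (cutK a b (fun _ _ => 1))) :=
    cutK_measurable measurable_const
  have pK := cutK_nonneg hk.2.1
  have pK' := cutK_nonneg hk'.2.1
  have pT := cutK_nonneg (one_pos_dom (a := a) (b := b))
  have c1 := conv_eq hm hp hk.2.1 hk'.2.1 (fun x y h1 h2 h3 => (hconj x y h1 h2 h3).1)
  -- integrals against the unit kernel are interval integrals
  have tr : ∀ z, a ≤ z → z ≤ b → ∀ φ : ℝ → ℝ,
      (∫ y, cutK a b (fun _ _ => 1) z y * φ y ∂(wMeas a b ω) = ∫ y in a..z, ω y * φ y) ∧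
      (Integrable (fun y => cutK a b (fun _ _ => 1) z y * φ y) (wMeas a b ω) ↔
        IntervalIntegrable (fun y => ω y * φ y) volume a z) := by
    intro z haz hzb φ
    refine bridge hm hp le_rfl haz hzb ?_ ?_
    · intro y hy
      rw [cutK_eq hy.1.le hy.2 hzb, one_mul]
    · intro y hy
      rw [cutK_zero (fun h => hy ⟨h.1, h.2.1.le⟩), zero_mul]
  set g : ℝ → ℝ := fun y => (ω y)⁻¹ * μ y with hg
  have hfν : Integrable f (wMeas a b ω) := (wMeas_integrable hm hp).2 (weight_integrable hω hf)
  have hgν : Integrable g (wMeas a b ω) := by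
    rw [wMeas_integrable hm hp]
    refine (integrable_congr ?_).1 hμ
    filter_upwards [ae_restrict_mem measurableSet_Icc] with y hy
    rw [hg, ← mul_assoc, mul_inv_cancel₀ (hp y hy).ne', one_mul]
  have E1 := (fub (ν := wMeas a b ω) (hK.of_uncurry_left (x := x)) hK' (pK x) pK' _ (c1 x) 1
    ENNReal.one_ne_top (by
      intro y
      unfold cutK
      split_ifs <;> simp) f hfν).2
  have F1 := fub (ν := wMeas a b ω) (hK.of_uncurry_left (x := x)) hT (pK x) pT _
    (fun y => rfl) R hRt hR g hgν
  have F2 := fub (ν := wMeas a b ω) (hT.of_uncurry_left (x := x)) hK (pT x) pK _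
    (fun y => (hcomm x y).symm) R hRt hR g hgν
  -- the function `Δ`
  have i1 : Integrable (fun z => cutK a b k x z * cutK a b (fun _ _ => 1) z a) (wMeas a b ω) := by
    refine ⟨((hK.of_uncurry_left (x := x)).mul
      (hT.of_uncurry_right (y := a))).aestronglyMeasurable, ?_⟩
    rw [hasFiniteIntegral_iff_ofReal
      (Filter.Eventually.of_forall fun z => mul_nonneg (pK _ _) (pT _ _))]
    exact (hR a).trans_lt hRt.lt_top
  have i2 : Integrable (fun z => cutK a b (fun _ _ => 1) x z * cutK a b k z a) (wMeas a b ω) := by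
    refine ⟨((hT.of_uncurry_left (x := x)).mul
      (hK.of_uncurry_right (y := a))).aestronglyMeasurable, ?_⟩
    rw [hasFiniteIntegral_iff_ofReal
      (Filter.Eventually.of_forall fun z => mul_nonneg (pT _ _) (pK _ _)), ← hcomm]
    exact (hR a).trans_lt hRt.lt_top
  have i3 : ∫ z, cutK a b k x z * cutK a b (fun _ _ => 1) z a ∂(wMeas a b ω)
      = ∫ z, cutK a b (fun _ _ => 1) x z * cutK a b k z a ∂(wMeas a b ω) := by
    rw [integral_eq_lintegral_of_nonneg_ae
        (Filter.Eventually.of_forall fun z => mul_nonneg (pK _ _) (pT _ _)) i1.1,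
      integral_eq_lintegral_of_nonneg_ae
        (Filter.Eventually.of_forall fun z => mul_nonneg (pT _ _) (pK _ _)) i2.1, hcomm]
  have i4 : ∫ z, cutK a b k x z * cutK a b (fun _ _ => 1) z a ∂(wMeas a b ω)
      = ∫ z in a..x, k x z * ω z := by
    refine (bridge hm hp le_rfl hax.le hxb.le ?_ ?_).1
    · intro z hz
      rw [cutK_eq hz.1.le hz.2 hxb.le, cutK_eq le_rfl hz.1 (hz.2.le.trans hxb.le)]
      ring
    · intro z hz
      rw [cutK_zero (y := z) (fun h => hz ⟨h.1, h.2.1.le⟩), zero_mul]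
  have i5 := (tr x hax.le hxb.le (fun z => cutK a b k z a)).1
  refine ⟨(tr x hax.le hxb.le _).2.1 i2,
    (tr x hax.le hxb.le _).2.1 F2.1, i4.symm.trans (i3.trans i5), ?_⟩
  -- substitute the representation
  have E2 : ∫ z, cutK a b k x z * ∫ y, cutK a b k' z y * f y ∂(wMeas a b ω) ∂(wMeas a b ω)
      = ∫ z, (c * (cutK a b k x z * cutK a b (fun _ _ => 1) z a) +
        cutK a b k x z * ∫ y, cutK a b (fun _ _ => 1) z y * g y ∂(wMeas a b ω)) ∂(wMeas a b ω) := by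
    refine integral_congr_ae ?_
    have hac : wMeas a b ω ≪ volume.restrict (Icc a b) := withDensity_absolutelyContinuous _ _
    have n1 : ∀ᵐ z ∂(volume.restrict (Icc a b)), z ≠ a :=
      ae_restrict_of_ae (Measure.ae_ne volume a)
    filter_upwards [hac.ae_le hrep, hac.ae_le n1,
      hac.ae_le (ae_restrict_mem measurableSet_Icc)] with z h1 h2 h3
    have h4 : a < z := lt_of_le_of_ne h3.1 (Ne.symm h2)
    have h5 : ∫ y, cutK a b k' z y * f y ∂(wMeas a b ω) = Ia a ω k' f z := by
      refine (bridge hm hp le_rfl h3.1 h3.2 ?_ ?_).1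
      · intro y hy
        rw [cutK_eq hy.1.le hy.2 h3.2]
        ring
      · intro y hy
        rw [cutK_zero (fun h => hy ⟨h.1, h.2.1.le⟩), zero_mul]
    have h6 : ∫ y in a..z, ω y * g y = ∫ y in a..z, μ y := by
      refine intervalIntegral.integral_congr fun y hy => ?_
      rw [uIcc_of_le h3.1] at hy
      simp only [hg]
      rw [← mul_assoc, mul_inv_cancel₀ (hp y ⟨hy.1, hy.2.trans h3.2⟩).ne', one_mul]
    rw [h5, h1, (tr z h3.1 h3.2 g).1, h6, cutK_eq (x := z) le_rfl h4 h3.2]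
    ring
  rw [integral_add (i1.const_mul c) F1.1, integral_const_mul, F1.2, ← F2.2, i3, i5, E1,
    (tr x hax.le hxb.le _).1] at E2
  rw [← E2, ← (tr x hax.le hxb.le f).1]
  refine integral_congr_ae (Filter.Eventually.of_forall fun z => ?_)
  dsimp only
  rw [ENNReal.toReal_ofReal (pT _ _)]

end Helpers

/-- if `k` and `k'` are conjugate and `I_a^{k'} f` has the absolutely continuous
representative `x ↦ c + ∫_a^x μ(t) dt` (so `D_a^{k'} f = ω⁻¹ μ` and `(I_a^{k'} f)(a) = c`),
then, with `Δ(x) = δ_{k,𝟙}(x,a) = ∫_a^x k(x,z) ω(z) dz`, for a.e. `x ∈ [a,b]` the map `Δ` is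
differentiable at `x` and `I_a^k (D_a^{k'} f)(x) = f(x) − c (1/ω(x)) Δ'(x)`. -/
theorem stmt11 (a b : ℝ) (hab : a < b) (ω : ℝ → ℝ) (hω : IsWeight a b ω)
    (k k' : ℝ → ℝ → ℝ) (hk : MemK a b ω k) (hk' : MemK a b ω k')
    (hconj : Conjugate a b ω k k')
    (f μ : ℝ → ℝ) (hf : IntegrableOn f (Icc a b)) (hμ : IntegrableOn μ (Icc a b))
    (c : ℝ)
    (hrep : ∀ᵐ x ∂(volume.restrict (Icc a b)),
      Ia a ω k' f x = c + ∫ t in a..x, μ t) :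
    ∀ᵐ x ∂(volume.restrict (Icc a b)),
      DifferentiableAt ℝ (fun t => ∫ z in a..t, k t z * ω z) x ∧
      Ia a ω k (fun y => (ω y)⁻¹ * μ y) x =
        f x - c * ((ω x)⁻¹ * deriv (fun t => ∫ z in a..t, k t z * ω z) x) := by
  have hp := hω.2.1
  have hm := hω.1
  set J : ℝ → ℝ := fun z => ∫ y, cutK a b k z y * ((ω y)⁻¹ * μ y) ∂(wMeas a b ω) with hJ
  have hc := fun x hax hxb => core hab hω hk hk' hconj hf hμ c hrep (x := x) hax hxb
  have key : ∀ d, d < b → ∀ᵐ x, x ∈ Ioo a d →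
      DifferentiableAt ℝ (fun t => ∫ z in a..t, k t z * ω z) x ∧
      Ia a ω k (fun y => (ω y)⁻¹ * μ y) x =
        f x - c * ((ω x)⁻¹ * deriv (fun t => ∫ z in a..t, k t z * ω z) x) := by
    intro d hd
    by_cases had : a < d
    · obtain ⟨h1, h2, -, -⟩ := hc d had hd
      have h3 : IntervalIntegrable (fun z => ω z * f z) volume a d := by
        rw [intervalIntegrable_iff_integrableOn_Ioc_of_le had.le]
        exact (weight_integrable hω hf).mono_set
          (Ioc_subset_Icc_self.trans (Icc_subset_Icc le_rfl hd.le))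
      filter_upwards [h1.ae_hasDerivAt_integral, h2.ae_hasDerivAt_integral,
        h3.ae_hasDerivAt_integral] with x d1 d2 d3 hx
      have hxu : x ∈ uIcc a d := by
        rw [uIcc_of_le had.le]
        exact Ioo_subset_Icc_self hx
      have d1 := d1 hxu a left_mem_uIcc
      have d2 := d2 hxu a left_mem_uIcc
      have d3 := d3 hxu a left_mem_uIcc
      have hn : Ioo a d ∈ nhds x := Ioo_mem_nhds hx.1 hx.2
      have D : HasDerivAt (fun t => ∫ z in a..t, k t z * ω z) (ω x * cutK a b k x a) x := by
        refine d1.congr_of_eventuallyEq ?_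
        filter_upwards [hn] with t ht
        exact (hc t ht.1 (ht.2.trans hd)).2.2.1
      have D3 := ((d1.const_mul c).add d2).congr_of_eventuallyEq
        (f₁ := fun x => ∫ z in a..x, ω z * f z) (by
          filter_upwards [hn] with t ht
          exact (hc t ht.1 (ht.2.trans hd)).2.2.2)
      have e := d3.unique D3
      have hxb : x < b := hx.2.trans hd
      have hIa : J x = Ia a ω k (fun y => (ω y)⁻¹ * μ y) x := by
        refine (bridge hm hp le_rfl hx.1.le hxb.le ?_ ?_).1
        · intro y hy
          rw [cutK_eq hy.1.le hy.2 hxb.le]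
          ring
        · intro y hy
          rw [cutK_zero (fun h => hy ⟨h.1, h.2.1.le⟩), zero_mul]
      refine ⟨D.differentiableAt, ?_⟩
      rw [D.deriv, ← hIa]
      have hw : 0 < ω x := hp x ⟨hx.1.le, hxb.le⟩
      have e' : ω x * f x = c * (ω x * cutK a b k x a) + ω x * J x := e
      field_simp
      apply mul_left_cancel₀ hw.ne'
      linarith
    · exact Filter.Eventually.of_forall fun x hx => absurd (hx.1.trans hx.2) had
  rw [ae_restrict_iff' measurableSet_Icc]
  obtain ⟨u, -, hu, hul⟩ := exists_seq_strictMono_tendsto b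
  have hall := ae_all_iff.2 fun n => key (u n) (hu n)
  filter_upwards [hall, Measure.ae_ne volume a, Measure.ae_ne volume b] with x hx hxa hxb hxm
  have hlt : x < b := lt_of_le_of_ne hxm.2 hxb
  obtain ⟨n, hn⟩ := (hul.eventually (lt_mem_nhds hlt)).exists
  exact hx n ⟨lt_of_le_of_ne hxm.1 (Ne.symm hxa), hn⟩

end
end

section
/- Let α > 0 and f ∈ L¹([0,1];ℝ). Then H_0^α(S_0^α f)(x) = S_0^α(H_0^α f)(x) = ∫_0^x f(y) dy for a.e. x ∈ [0,1], and H_1^α(S_1^α f)(x) = S_1^α(H_1^α f)(x) = ∫_x^1 f(y) dy for a.e. x ∈ [0,1]. -/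
open MeasureTheory Set

noncomputable section

/-- the exponential integral function `E₁(x) = ∫_x^∞ e^{−t}/t dt`. -/
def E1 (x : ℝ) : ℝ := ∫ t in Ioi x, Real.exp (-t) / t

/-- `F(t) = (∫_0^∞ t^{s−1}/Γ(s) ds) e^{−t}`. -/
def Ffun (t : ℝ) : ℝ := (∫ s in Ioi (0:ℝ), t ^ (s - 1) / Real.Gamma s) * Real.exp (-t)

/-- left-sided fractional integral of type (I): `(H_0^α f)(x) = ∫_0^x F((x−y)/α) f(y) dy`. -/
def H0 (α : ℝ) (f : ℝ → ℝ) (x : ℝ) : ℝ := ∫ y in (0:ℝ)..x, Ffun ((x - y) / α) * f y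

/-- right-sided fractional integral of type (I): `(H_1^α f)(x) = ∫_x^1 F((y−x)/α) f(y) dy`. -/
def H1 (α : ℝ) (f : ℝ → ℝ) (x : ℝ) : ℝ := ∫ y in x..(1:ℝ), Ffun ((y - x) / α) * f y

/-- left-sided fractional integral of type (II):
`(S_0^α f)(x) = (1/α) ∫_0^x E₁((x−y)/α) f(y) dy`. -/
def S0 (α : ℝ) (f : ℝ → ℝ) (x : ℝ) : ℝ := (1 / α) * ∫ y in (0:ℝ)..x, E1 ((x - y) / α) * f y

/-- right-sided fractional integral of type (II):
`(S_1^α f)(x) = (1/α) ∫_x^1 E₁((y−x)/α) f(y) dy`. -/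
def S1 (α : ℝ) (f : ℝ → ℝ) (x : ℝ) : ℝ := (1 / α) * ∫ y in x..(1:ℝ), E1 ((y - x) / α) * f y

/-- Gamma density (rate one), extended by zero. -/
def GG (s t : ℝ) : ENNReal :=
  if 0 < s ∧ 0 < t then ENNReal.ofReal (t ^ (s - 1) * Real.exp (-t) / Real.Gamma s) else 0

lemma GG_meas : Measurable (fun p : ℝ × ℝ => GG p.1 p.2) := by
  have hGam : Measurable (fun s : ℝ => if 0 < s then Real.Gamma s else 0) := by
    have := (Real.differentiableOn_Gamma_Ioi.continuousOn).measurable_piecewise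
      (continuousOn_const (c := (0:ℝ))) (measurableSet_Ioi)
    convert this using 1
    ext s; simp [Set.piecewise]
  have h : (fun p : ℝ × ℝ => GG p.1 p.2) = fun p : ℝ × ℝ =>
      if 0 < p.1 ∧ 0 < p.2 then ENNReal.ofReal (p.2 ^ (p.1 - 1) * Real.exp (-p.2) /
        (if 0 < p.1 then Real.Gamma p.1 else 0)) else 0 := by
    ext p
    unfold GG
    split_ifs with h1 h2
    · rfl
    · exact absurd h1.1 h2
    · rfl
  rw [h]
  refine Measurable.ite ?_ ?_ measurable_const
  · exact (measurableSet_lt measurable_const measurable_fst).inter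
      (measurableSet_lt measurable_const measurable_snd)
  · have := hGam.comp (measurable_fst : Measurable (Prod.fst : ℝ × ℝ → ℝ))
    simp only [Function.comp_def] at this
    fun_prop

@[fun_prop]
lemma GG_meas' {β : Type*} [MeasurableSpace β] {f g : β → ℝ} (hf : Measurable f)
    (hg : Measurable g) : Measurable (fun b => GG (f b) (g b)) :=
  GG_meas.comp (hf.prodMk hg)

lemma GG_of_pos {s t : ℝ} (hs : 0 < s) (ht : 0 < t) :
    GG s t = ENNReal.ofReal (t ^ (s - 1) * Real.exp (-t) / Real.Gamma s) := by
  simp [GG, hs, ht]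

lemma GG_nonpos_left {s t : ℝ} (hs : s ≤ 0) : GG s t = 0 := by
  simp [GG, hs.not_gt]

lemma GG_nonpos_right {s t : ℝ} (ht : t ≤ 0) : GG s t = 0 := by
  simp [GG, ht.not_gt]

lemma lint_scale (g : ℝ → ENNReal) (hg : Measurable g) {t : ℝ} (ht : 0 < t) :
    ∫⁻ y, g y = ENNReal.ofReal t * ∫⁻ x, g (t * x) := by
  conv_lhs => rw [← Real.smul_map_volume_mul_left ht.ne']
  rw [lintegral_smul_measure, lintegral_map hg (measurable_const_mul t), abs_of_pos ht, smul_eq_mul]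

lemma GG_conv {s r : ℝ} (hs : 0 < s) (hr : 0 < r) :
    lconvolution (GG s) (GG r) volume = GG (s + r) := by
  ext t
  rw [lconvolution_def]
  rcases le_or_gt t 0 with ht | ht
  · rw [GG_nonpos_right ht]
    convert lintegral_zero with y
    rcases le_or_gt y 0 with hy | hy
    · simp [GG_nonpos_right hy]
    · rw [GG_nonpos_right (t := -y + t) (by linarith)]; simp
  rw [lint_scale _ (by fun_prop) ht, ← lintegral_const_mul _ (by fun_prop)]
  have key : ∀ x, ENNReal.ofReal t * (GG s (t * x) * GG r (-(t * x) + t))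
      = GG (s + r) t * ProbabilityTheory.betaPDF s r x := by
    intro x
    rcases le_or_gt x 0 with hx | hx
    · rw [ProbabilityTheory.betaPDF_eq_zero_of_nonpos hx, GG_nonpos_right (t := t * x)]
      · simp
      · exact mul_nonpos_of_nonneg_of_nonpos ht.le hx
    rcases le_or_gt 1 x with hx1 | hx1
    · rw [ProbabilityTheory.betaPDF_eq_zero_of_one_le hx1, GG_nonpos_right (t := -(t * x) + t)]
      · simp
      · nlinarith
    have e : -(t * x) + t = t * (1 - x) := by ring
    have h1x : 0 < 1 - x := by linarith
    rw [e, ProbabilityTheory.betaPDF_of_pos_lt_one hx hx1, GG_of_pos hs (by positivity),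
      GG_of_pos hr (by positivity), GG_of_pos (by positivity) ht]
    have := Real.Gamma_pos_of_pos hs
    have := Real.Gamma_pos_of_pos hr
    have := Real.Gamma_pos_of_pos (add_pos hs hr)
    rw [← ENNReal.ofReal_mul (by positivity), ← ENNReal.ofReal_mul (by positivity),
      ← ENNReal.ofReal_mul (by positivity)]
    congr 1
    rw [Real.mul_rpow ht.le hx.le, Real.mul_rpow ht.le h1x.le, ProbabilityTheory.beta]
    have e1 : t ^ (s + r - 1) = t * (t ^ (s - 1) * t ^ (r - 1)) := by
      rw [← Real.rpow_add ht, mul_comm t, ← Real.rpow_add_one ht.ne']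
      congr 1; ring
    have e2 : Real.exp (-t) = Real.exp (-(t * x)) * Real.exp (-(t * (1 - x))) := by
      rw [← Real.exp_add]; congr 1; ring
    rw [e1, e2]
    field_simp
  simp_rw [key]
  rw [lintegral_const_mul', ProbabilityTheory.lintegral_betaPDF_eq_one hs hr, mul_one]
  rw [GG_of_pos (by positivity) ht]
  exact ENNReal.ofReal_ne_top

lemma GG_int {s : ℝ} (hs : 0 < s) : ∫⁻ t, GG s t = 1 := by
  rw [← ProbabilityTheory.lintegral_gammaPDF_eq_one hs one_pos]
  apply lintegral_congr_ae
  filter_upwards [compl_mem_ae_iff.2 (measure_singleton (μ := (volume : Measure ℝ)) (0:ℝ))] with t ht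
  rcases lt_or_gt_of_ne ht with h | h
  · rw [GG_nonpos_right h.le, ProbabilityTheory.gammaPDF_of_neg h]
  · rw [GG_of_pos hs h, ProbabilityTheory.gammaPDF_of_nonneg h.le]
    congr 1
    simp
    ring

lemma GG_int2 {s : ℝ} (hs : 0 < s) :
    ∫⁻ t, GG s t * ENNReal.ofReal (Real.exp (-t)) = ENNReal.ofReal ((2:ℝ) ^ (-s)) := by
  rw [← mul_one (ENNReal.ofReal ((2:ℝ) ^ (-s))),
    ← ProbabilityTheory.lintegral_gammaPDF_eq_one hs two_pos,
    ← lintegral_const_mul' _ _ ENNReal.ofReal_ne_top]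
  apply lintegral_congr_ae
  filter_upwards [compl_mem_ae_iff.2 (measure_singleton (μ := (volume : Measure ℝ)) (0:ℝ))] with t ht
  rcases lt_or_gt_of_ne ht with h | h
  · rw [GG_nonpos_right h.le, ProbabilityTheory.gammaPDF_of_neg h]; simp
  · have := Real.Gamma_pos_of_pos hs
    rw [GG_of_pos hs h, ProbabilityTheory.gammaPDF_of_nonneg h.le,
      ← ENNReal.ofReal_mul (by positivity), ← ENNReal.ofReal_mul (by positivity)]
    congr 1
    have e : Real.exp (-(2 * t)) = Real.exp (-t) * Real.exp (-t) := by
      rw [← Real.exp_add]; congr 1; ring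
    rw [e, Real.rpow_neg two_pos.le]
    field_simp

/-- The function `F`, as an extended nonnegative function, zero on `t ≤ 0`. -/
def FE (t : ℝ) : ENNReal := ∫⁻ s, GG s t

@[fun_prop]
lemma FE_meas : Measurable FE := by
  unfold FE
  exact Measurable.lintegral_prod_left' (f := fun p : ℝ × ℝ => GG p.1 p.2) GG_meas

lemma FE_nonpos {t : ℝ} (ht : t ≤ 0) : FE t = 0 := by
  simp [FE, GG_nonpos_right ht]

lemma FE_int (T : ℝ) : ∫⁻ t in Iio T, FE t < ⊤ := by
  have h1 : ∫⁻ t in Iio T, FE t ≤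
      ∫⁻ t, ENNReal.ofReal (Real.exp T) * (FE t * ENNReal.ofReal (Real.exp (-t))) := by
    refine (setLIntegral_mono' measurableSet_Iio ?_).trans (setLIntegral_le_lintegral (Iio T) _)
    intro t ht
    rw [mul_left_comm, ← ENNReal.ofReal_mul (Real.exp_nonneg _), ← Real.exp_add]
    refine le_mul_of_one_le_right' ?_
    rw [ENNReal.one_le_ofReal]
    apply Real.one_le_exp
    have : t < T := ht
    linarith
  refine h1.trans_lt ?_
  rw [lintegral_const_mul' _ _ ENNReal.ofReal_ne_top]
  refine ENNReal.mul_lt_top ENNReal.ofReal_lt_top ?_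
  have h2 : ∫⁻ t, FE t * ENNReal.ofReal (Real.exp (-t)) =
      ∫⁻ s, ∫⁻ t, GG s t * ENNReal.ofReal (Real.exp (-t)) := by
    rw [lintegral_lintegral_swap (by unfold Function.uncurry; fun_prop)]
    refine lintegral_congr fun t => ?_
    rw [FE, lintegral_mul_const _ (by fun_prop)]
  rw [h2]
  have h3 : ∫⁻ s, ∫⁻ t, GG s t * ENNReal.ofReal (Real.exp (-t)) =
      ∫⁻ s in Ioi (0:ℝ), ENNReal.ofReal ((2:ℝ) ^ (-s)) := by
    rw [← lintegral_indicator measurableSet_Ioi]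
    refine lintegral_congr fun s => ?_
    by_cases hs : 0 < s
    · rw [GG_int2 hs, indicator_of_mem (by exact hs)]
    · rw [indicator_of_notMem (by exact hs)]
      simp [GG_nonpos_left (not_lt.1 hs)]
  rw [h3]
  have h4 : IntegrableOn (fun s : ℝ => Real.exp (-Real.log 2 * s)) (Ioi 0) :=
    integrableOn_exp_mul_Ioi (by simpa using Real.log_pos one_lt_two) 0
  have h5 := h4.lintegral_lt_top
  refine lt_of_eq_of_lt ?_ h5
  refine lintegral_congr fun s => ?_
  rw [Real.rpow_def_of_pos two_pos]
  congr 2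
  ring

/-- Heaviside function. -/
def TH (t : ℝ) : ENNReal := if 0 < t then 1 else 0

@[fun_prop]
lemma TH_meas : Measurable TH :=
  Measurable.ite measurableSet_Ioi measurable_const measurable_const

lemma TH_pos {t : ℝ} (ht : 0 < t) : TH t = 1 := by simp [TH, ht]
lemma TH_nonpos {t : ℝ} (ht : t ≤ 0) : TH t = 0 := by simp [TH, ht.not_gt]

/-- Upper incomplete Gamma function, zero for nonpositive argument. -/
def UU (r u : ℝ) : ENNReal :=
  ∫⁻ v, if 0 < u ∧ u < v then ENNReal.ofReal (v ^ (r - 1) * Real.exp (-v)) else 0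

lemma UU_int_meas (r : ℝ) : Measurable (fun p : ℝ × ℝ =>
    if 0 < p.1 ∧ p.1 < p.2 then ENNReal.ofReal (p.2 ^ (r - 1) * Real.exp (-p.2)) else 0) := by
  refine Measurable.ite ?_ (by fun_prop) measurable_const
  exact (measurableSet_lt measurable_const measurable_fst).inter
      (measurableSet_lt measurable_fst measurable_snd)

@[fun_prop]
lemma UU_meas (r : ℝ) : Measurable (UU r) := by
  unfold UU
  exact Measurable.lintegral_prod_right' (UU_int_meas r)

lemma UU_nonpos {r u : ℝ} (hu : u ≤ 0) : UU r u = 0 := by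
  simp [UU, hu.not_gt]

lemma UU_pos {r u : ℝ} (hu : 0 < u) :
    UU r u = ∫⁻ v in Ioi u, ENNReal.ofReal (v ^ (r - 1) * Real.exp (-v)) := by
  rw [← lintegral_indicator measurableSet_Ioi, UU]
  refine lintegral_congr fun v => ?_
  by_cases h : u < v
  · rw [indicator_of_mem (by exact h)]; simp [hu, h]
  · rw [indicator_of_notMem (by exact h)]; simp [h]

/-- total mass of `E₁` -/
lemma UU_zero_int : ∫⁻ u, UU 0 u = 1 := by
  unfold UU
  rw [lintegral_lintegral_swap (UU_int_meas 0).aemeasurable, ← GG_int one_pos]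
  refine lintegral_congr fun v => ?_
  rcases le_or_gt v 0 with hv | hv
  · rw [GG_nonpos_right hv]
    convert lintegral_zero with u
    rw [if_neg]; rintro ⟨h1, h2⟩; linarith
  · have : ∀ u, (if 0 < u ∧ u < v then ENNReal.ofReal (v ^ ((0:ℝ) - 1) * Real.exp (-v)) else 0)
        = (Ioo 0 v).indicator (fun _ => ENNReal.ofReal (v ^ ((0:ℝ) - 1) * Real.exp (-v))) u := by
      intro u; simp [indicator, mem_Ioo]
    simp_rw [this]
    rw [lintegral_indicator measurableSet_Ioo, lintegral_const, GG_of_pos one_pos hv]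
    simp only [MeasurableSet.univ, Measure.restrict_apply, univ_inter, Real.volume_Ioo, sub_zero]
    rw [← ENNReal.ofReal_mul (by positivity)]
    congr 1
    simp [Real.rpow_neg_one]
    field_simp

/-- lower regularized incomplete Gamma -/
def PP (s t : ℝ) : ENNReal := ∫⁻ y in Iio t, GG s y

lemma PP_eq (s : ℝ) : lconvolution (GG s) TH volume = PP s := by
  ext t
  rw [lconvolution_def, PP, ← lintegral_indicator measurableSet_Iio]
  refine lintegral_congr fun y => ?_
  by_cases h : y < t
  · rw [indicator_of_mem (by exact h), TH_pos (by linarith), mul_one]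
  · rw [indicator_of_notMem (by exact h), TH_nonpos (by linarith), mul_zero]

lemma FE_TH (t : ℝ) : lconvolution FE TH volume t = ∫⁻ y in Iio t, FE y := by
  rw [lconvolution_def, ← lintegral_indicator measurableSet_Iio]
  refine lintegral_congr fun y => ?_
  by_cases h : y < t
  · rw [indicator_of_mem (by exact h), TH_pos (by linarith), mul_one]
  · rw [indicator_of_notMem (by exact h), TH_nonpos (by linarith), mul_zero]

lemma PP_meas (t : ℝ) : Measurable (fun s => PP s t) := by
  unfold PP
  exact Measurable.lintegral_prod_right' (f := fun p : ℝ × ℝ => GG p.1 p.2) GG_meas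

@[fun_prop]
lemma PP_meas2 (s : ℝ) : Measurable (PP s) := by
  rw [← PP_eq]; exact measurable_lconvolution _ (by fun_prop) (by fun_prop)

lemma PP_le {s : ℝ} (hs : 0 < s) (t : ℝ) : PP s t ≤ 1 :=
  (setLIntegral_le_lintegral _ _).trans (GG_int hs).le

lemma PP_nonpos {s t : ℝ} (ht : t ≤ 0) : PP s t = 0 := by
  unfold PP
  refine setLIntegral_eq_zero measurableSet_Iio fun y hy => ?_
  have : y < t := hy
  exact GG_nonpos_right (by linarith)

lemma PP_add {r u : ℝ} (hr : 0 < r) (hu : 0 < u) :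
    PP r u + ENNReal.ofReal (1 / Real.Gamma r) * UU r u = 1 := by
  rw [← GG_int hr, ← lintegral_add_compl (GG r) (measurableSet_Iio (a := u)), PP]
  congr 1
  rw [UU_pos hu, ← lintegral_const_mul' _ _ ENNReal.ofReal_ne_top, compl_Iio,
    setLIntegral_congr (Ioi_ae_eq_Ici (a := u)).symm]
  refine setLIntegral_congr_fun measurableSet_Ioi fun v hv => ?_
  have hv' : u < v := hv
  have := Real.Gamma_pos_of_pos hr
  rw [GG_of_pos hr (by linarith)]
  rw [← ENNReal.ofReal_mul (by positivity)]
  congr 1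
  field_simp

lemma FE_GG {r : ℝ} (hr : 0 < r) :
    lconvolution FE (GG r) volume = fun t => ∫⁻ s in Ioi r, GG s t := by
  ext t
  rw [lconvolution_def]
  have : ∀ y, FE y * GG r (-y + t) = ∫⁻ s, GG s y * GG r (-y + t) := by
    intro y
    rw [FE, lintegral_mul_const _ (by fun_prop)]
  simp_rw [this]
  rw [lintegral_lintegral_swap (by unfold Function.uncurry; fun_prop)]
  have h2 : ∀ s, ∫⁻ y, GG s y * GG r (-y + t) =
      (Ioi r).indicator (fun s => GG s t) (s + r) := by
    intro s
    by_cases hs : 0 < s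
    · rw [indicator_of_mem (by simpa using hs), ← GG_conv hs hr, lconvolution_def]
    · rw [indicator_of_notMem (by simpa using hs)]
      simp [GG_nonpos_left (not_lt.1 hs)]
  simp_rw [h2]
  rw [lintegral_add_right_eq_self, lintegral_indicator measurableSet_Ioi]

lemma FE_PP {r : ℝ} (hr : 0 < r) (t : ℝ) :
    lconvolution FE (PP r) volume t = ∫⁻ s in Ioi r, PP s t := by
  rw [← PP_eq, lconvolution_assoc (by fun_prop) (by fun_prop) (by fun_prop), FE_GG hr,
    lconvolution_def]
  simp_rw [← PP_eq, lconvolution_def]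
  rw [lintegral_lintegral_swap (by unfold Function.uncurry; fun_prop)]
  refine lintegral_congr fun y => ?_
  rw [lintegral_mul_const _ (by fun_prop)]

lemma FE_int_eq (t : ℝ) : ∫⁻ y in Iio t, FE y = ∫⁻ s in Ioi 0, PP s t := by
  unfold FE PP
  rw [lintegral_lintegral_swap (by unfold Function.uncurry; fun_prop),
    ← lintegral_indicator measurableSet_Ioi]
  refine lintegral_congr fun s => ?_
  by_cases hs : 0 < s
  · rw [indicator_of_mem (by exact hs)]
  · rw [indicator_of_notMem (by exact hs)]
    simp [GG_nonpos_left (not_lt.1 hs)]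

lemma FE_UU {r : ℝ} (hr : 0 < r) (t : ℝ) :
    lconvolution FE (UU r) volume t =
      ENNReal.ofReal (Real.Gamma r) * ∫⁻ s in Ioc 0 r, PP s t := by
  have hG := Real.Gamma_pos_of_pos hr
  have h1 : lconvolution FE TH volume t = lconvolution FE (PP r) volume t +
      ENNReal.ofReal (1 / Real.Gamma r) * lconvolution FE (UU r) volume t := by
    simp only [lconvolution_def]
    rw [← lintegral_const_mul' _ _ ENNReal.ofReal_ne_top, ← lintegral_add_left (by fun_prop)]
    refine lintegral_congr fun y => ?_
    rw [mul_left_comm, ← mul_add]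
    congr 1
    rcases le_or_gt (-y + t) 0 with h | h
    · rw [TH_nonpos h, PP_nonpos h, UU_nonpos h]; simp
    · rw [TH_pos h, PP_add hr h]
  have hfin := FE_int t
  rw [FE_TH, FE_PP hr, FE_int_eq] at h1
  rw [FE_int_eq] at hfin
  have h2 : ∫⁻ s in Ioi 0, PP s t = (∫⁻ s in Ioi r, PP s t) + ∫⁻ s in Ioc 0 r, PP s t := by
    rw [add_comm, ← Ioc_union_Ioi_eq_Ioi hr.le, lintegral_union measurableSet_Ioi]
    exact Ioc_disjoint_Ioi_same
  have h3 : ∫⁻ s in Ioi r, PP s t ≠ ⊤ := by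
    refine ne_top_of_le_ne_top hfin.ne ?_
    rw [h2]; exact le_self_add
  rw [h2] at h1
  have h4 := (ENNReal.add_right_inj h3).1 h1
  rw [h4, ← mul_assoc, ← ENNReal.ofReal_mul hG.le, mul_one_div_cancel hG.ne']
  simp

lemma GG_one {v : ℝ} (hv : 0 < v) : GG 1 v = ENNReal.ofReal (Real.exp (-v)) := by
  rw [GG_of_pos one_pos hv]; simp

lemma rpow_bound {r v : ℝ} (hr : 0 < r) (hr1 : r ≤ 1) (hv : 0 < v) :
    v ^ (r - 1) ≤ v ^ ((0:ℝ) - 1) + 1 := by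
  rcases le_or_gt v 1 with h | h
  · have := Real.rpow_le_rpow_of_exponent_ge hv h (show (0:ℝ) - 1 ≤ r - 1 by linarith)
    linarith
  · have := Real.rpow_le_one_of_one_le_of_nonpos h.le (show r - 1 ≤ 0 by linarith)
    have : 0 ≤ v ^ ((0:ℝ) - 1) := by positivity
    linarith

lemma UU_bound {r v : ℝ} (hr : 0 < r) (hr1 : r ≤ 1) (hv : 0 < v) :
    ENNReal.ofReal (v ^ (r - 1) * Real.exp (-v)) ≤
      ENNReal.ofReal (v ^ ((0:ℝ) - 1) * Real.exp (-v)) + GG 1 v := by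
  rw [GG_one hv, ← ENNReal.ofReal_add (by positivity) (by positivity)]
  apply ENNReal.ofReal_le_ofReal
  have := mul_le_mul_of_nonneg_right (rpow_bound hr hr1 hv) (Real.exp_nonneg (-v))
  linarith

lemma UU_bd_int {u : ℝ} (hu : 0 < u) :
    ∫⁻ v in Ioi u, (ENNReal.ofReal (v ^ ((0:ℝ) - 1) * Real.exp (-v)) + GG 1 v) ≤ UU 0 u + 1 := by
  rw [lintegral_add_right _ (by fun_prop), UU_pos hu]
  gcongr
  exact (setLIntegral_le_lintegral _ _).trans (GG_int one_pos).le

lemma UU_le {r : ℝ} (hr : 0 < r) (hr1 : r ≤ 1) (u : ℝ) : UU r u ≤ UU 0 u + TH u := by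
  rcases le_or_gt u 0 with hu | hu
  · rw [UU_nonpos hu]; simp
  rw [TH_pos hu]
  refine le_trans ?_ (UU_bd_int hu)
  rw [UU_pos hu]
  refine setLIntegral_mono' measurableSet_Ioi fun v hv => ?_
  exact UU_bound hr hr1 (hu.trans hv)

lemma UU_zero_fin (u : ℝ) : UU 0 u < ⊤ := by
  rcases le_or_gt u 0 with hu | hu
  · rw [UU_nonpos hu]; simp
  have : UU 0 u ≤ ∫⁻ v in Ioi u, ENNReal.ofReal (u⁻¹) * GG 1 v := by
    rw [UU_pos hu]
    refine setLIntegral_mono' measurableSet_Ioi fun v hv => ?_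
    have hv' : u < v := hv
    rw [GG_one (hu.trans hv), ← ENNReal.ofReal_mul (by positivity)]
    apply ENNReal.ofReal_le_ofReal
    gcongr
    rw [zero_sub, Real.rpow_neg_one]
    exact inv_anti₀ hu hv'.le
  refine this.trans_lt ?_
  rw [lintegral_const_mul' _ _ ENNReal.ofReal_ne_top]
  refine ENNReal.mul_lt_top ENNReal.ofReal_lt_top ?_
  refine ((setLIntegral_le_lintegral _ _).trans (GG_int one_pos).le).trans_lt (by simp)

section Limits
open Filter Topology

lemma ev_small : ∀ᶠ r : ℝ in 𝓝[>] 0, 0 < r ∧ r ≤ 1 := by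
  filter_upwards [Ioc_mem_nhdsGT (zero_lt_one (α := ℝ))] with r hr using hr

lemma UU_tendsto (u : ℝ) : Tendsto (fun r => UU r u) (𝓝[>] 0) (𝓝 (UU 0 u)) := by
  rcases le_or_gt u 0 with hu | hu
  · simp_rw [UU_nonpos hu]; exact tendsto_const_nhds
  simp_rw [UU_pos hu]
  refine tendsto_lintegral_filter_of_dominated_convergence
    (fun v => ENNReal.ofReal (v ^ ((0:ℝ) - 1) * Real.exp (-v)) + GG 1 v) ?_ ?_ ?_ ?_
  · exact Eventually.of_forall fun r => by fun_prop
  · filter_upwards [ev_small] with r hr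
    filter_upwards [ae_restrict_mem measurableSet_Ioi] with v hv
    exact UU_bound hr.1 hr.2 (hu.trans hv)
  · refine ne_top_of_le_ne_top ?_ (UU_bd_int hu)
    simp [(UU_zero_fin u).ne]
  · filter_upwards [ae_restrict_mem measurableSet_Ioi] with v hv
    have hv0 : 0 < v := hu.trans hv
    refine ENNReal.tendsto_ofReal ?_
    refine Tendsto.mul ?_ tendsto_const_nhds
    have : ContinuousAt (fun r : ℝ => v ^ (r - 1)) 0 := by
      refine ContinuousAt.rpow continuousAt_const (by fun_prop) (Or.inl hv0.ne')
    exact this.tendsto.mono_left nhdsWithin_le_nhds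

lemma Gamma_tendsto : Tendsto (fun r : ℝ => Real.Gamma (r + 1)) (𝓝[>] 0) (𝓝 1) := by
  have h : ContinuousAt Real.Gamma (0 + 1) := by
    refine (Real.differentiableAt_Gamma fun m => ?_).continuousAt
    have : (0:ℝ) ≤ m := m.cast_nonneg
    intro h; linarith
  have h2 : ContinuousAt (fun r : ℝ => Real.Gamma (r + 1)) 0 :=
    ContinuousAt.comp (f := fun r : ℝ => r + 1) h (by fun_prop)
  have := h2.tendsto.mono_left (nhdsWithin_le_nhds (s := Ioi 0))
  simpa using this

lemma PP_tendsto {t : ℝ} (ht : 0 < t) : Tendsto (fun s => PP s t) (𝓝[>] 0) (𝓝 1) := by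
  have h1 : Tendsto (fun s => ENNReal.ofReal (1 / Real.Gamma s) * (UU 0 t + 1)) (𝓝[>] 0) (𝓝 0) := by
    have a : Tendsto (fun s : ℝ => 1 / Real.Gamma s) (𝓝[>] 0) (𝓝 0) := by
      have b : Tendsto (fun s : ℝ => s / Real.Gamma (s + 1)) (𝓝[>] 0) (𝓝 (0 / 1)) :=
        Tendsto.div (tendsto_id.mono_left nhdsWithin_le_nhds) Gamma_tendsto one_ne_zero
      rw [zero_div] at b
      refine b.congr' ?_
      filter_upwards [self_mem_nhdsWithin] with s hs
      have hs' : (0:ℝ) < s := hs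
      have := Real.Gamma_pos_of_pos hs'
      rw [Real.Gamma_add_one hs'.ne']
      field_simp
    have c := ENNReal.tendsto_ofReal a
    have hne : UU 0 t + 1 ≠ ⊤ := by simp [(UU_zero_fin t).ne]
    have d := ENNReal.Tendsto.mul_const c (Or.inr hne)
    simpa using d
  have h2 : Tendsto (fun s => 1 - ENNReal.ofReal (1 / Real.Gamma s) * (UU 0 t + 1)) (𝓝[>] 0) (𝓝 1) := by
    have := ENNReal.Tendsto.sub (tendsto_const_nhds (x := (1:ENNReal))) h1 (Or.inl (by simp))
    simpa using this
  refine tendsto_of_tendsto_of_tendsto_of_le_of_le' h2 tendsto_const_nhds ?_ ?_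
  · filter_upwards [ev_small] with s hs
    rw [tsub_le_iff_right]
    refine (PP_add hs.1 ht).symm.le.trans ?_
    gcongr
    simpa [TH_pos ht] using UU_le hs.1 hs.2 t
  · filter_upwards [ev_small] with s hs
    exact PP_le hs.1 t

lemma conv_one {t : ℝ} (ht : 0 < t) (hfin : lconvolution FE (UU 0) volume t < ⊤) :
    lconvolution FE (UU 0) volume t = 1 := by
  have lim : Tendsto (fun r => lconvolution FE (UU r) volume t) (𝓝[>] 0)
      (𝓝 (lconvolution FE (UU 0) volume t)) := by
    simp only [lconvolution_def]
    refine tendsto_lintegral_filter_of_dominated_convergence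
      (fun y => FE y * (UU 0 (-y + t) + TH (-y + t))) ?_ ?_ ?_ ?_
    · exact Eventually.of_forall fun r => by fun_prop
    · filter_upwards [ev_small] with r hr
      refine ae_of_all _ fun y => ?_
      gcongr
      exact UU_le hr.1 hr.2 _
    · simp_rw [mul_add]
      rw [lintegral_add_left (by fun_prop)]
      have := FE_int t
      rw [← FE_TH, lconvolution_def] at this
      rw [lconvolution_def] at hfin
      exact (ENNReal.add_lt_top.2 ⟨hfin, this⟩).ne
    · have hFE : ∀ᵐ y ∂(volume : Measure ℝ), y < t → FE y < ⊤ := by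
        refine (ae_restrict_iff' (s := Iio t) measurableSet_Iio).1 ?_
        exact ae_lt_top (by fun_prop) (FE_int t).ne
      filter_upwards [hFE] with y hy
      by_cases h : y < t
      · exact ENNReal.Tendsto.const_mul (UU_tendsto _) (Or.inr (hy h).ne)
      · have : -y + t ≤ 0 := by linarith
        simp_rw [UU_nonpos this]
        exact tendsto_const_nhds
  have hΓ : Tendsto (fun r : ℝ => ENNReal.ofReal (Real.Gamma (r + 1))) (𝓝[>] 0) (𝓝 1) := by
    simpa using ENNReal.tendsto_ofReal Gamma_tendsto
  have e : ∀ r : ℝ, 0 < r → ENNReal.ofReal (Real.Gamma (r + 1)) =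
      ENNReal.ofReal (Real.Gamma r) * ENNReal.ofReal r := by
    intro r hr
    rw [← ENNReal.ofReal_mul (Real.Gamma_pos_of_pos hr).le, Real.Gamma_add_one hr.ne', mul_comm]
  apply le_antisymm
  · refine le_of_tendsto_of_tendsto lim hΓ ?_
    filter_upwards [ev_small] with r hr
    rw [FE_UU hr.1, e r hr.1]
    gcongr
    calc ∫⁻ s in Ioc 0 r, PP s t ≤ ∫⁻ s in Ioc 0 r, 1 :=
          setLIntegral_mono' measurableSet_Ioc fun s hs => PP_le hs.1 t
      _ = ENNReal.ofReal r := by simp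
  · refine le_of_forall_lt fun c hc => ?_
    obtain ⟨d, hcd, hd⟩ := exists_between hc
    refine hcd.trans_le ?_
    have hd2 : Tendsto (fun r : ℝ => ENNReal.ofReal (Real.Gamma (r + 1)) * d) (𝓝[>] 0) (𝓝 d) := by
      have := ENNReal.Tendsto.mul_const hΓ (b := d) (Or.inl one_ne_zero)
      simpa using this
    refine le_of_tendsto_of_tendsto hd2 lim ?_
    have hev : ∀ᶠ s in 𝓝[>] (0:ℝ), d < PP s t := (PP_tendsto ht).eventually (lt_mem_nhds hd)
    obtain ⟨ε, hε, hsub⟩ := mem_nhdsGT_iff_exists_Ioc_subset.1 hev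
    filter_upwards [ev_small, Ioc_mem_nhdsGT hε] with r hr hrε
    rw [FE_UU hr.1, e r hr.1, mul_assoc]
    gcongr
    calc ENNReal.ofReal r * d = ∫⁻ s in Ioc 0 r, d := by simp [mul_comm]
      _ ≤ _ := setLIntegral_mono' measurableSet_Ioc fun s hs =>
          le_of_lt (hsub ⟨hs.1, hs.2.trans hrε.2⟩)

lemma conv_fin : ∀ᵐ t ∂(volume : Measure ℝ), lconvolution FE (UU 0) volume t < ⊤ := by
  have hm : Measurable (lconvolution FE (UU 0) volume) :=
    measurable_lconvolution _ (by fun_prop) (by fun_prop)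
  have h : ∀ n : ℕ, ∀ᵐ t : ℝ, t < (n:ℝ) → lconvolution FE (UU 0) volume t < ⊤ := by
    intro n
    refine (ae_restrict_iff' (s := Iio (n:ℝ)) measurableSet_Iio).1 ?_
    refine ae_lt_top hm ?_
    refine ne_top_of_le_ne_top (FE_int (n:ℝ)).ne ?_
    simp only [lconvolution_def]
    rw [lintegral_lintegral_swap (by unfold Function.uncurry; fun_prop),
      ← lintegral_indicator measurableSet_Iio]
    refine lintegral_mono fun y => ?_
    by_cases hy : y < n
    · rw [indicator_of_mem (by exact hy)]
      rw [lintegral_const_mul _ (by fun_prop)]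
      have : ∫⁻ a in Iio (n:ℝ), UU 0 (-y + a) ≤ 1 := by
        refine (setLIntegral_le_lintegral _ _).trans ?_
        rw [lintegral_add_left_eq_self, UU_zero_int]
      calc _ ≤ FE y * 1 := by gcongr
        _ = _ := mul_one _
    · rw [indicator_of_notMem (by exact hy)]
      refine le_of_eq (setLIntegral_eq_zero measurableSet_Iio fun a ha => ?_)
      have : a < n := ha
      rw [UU_nonpos (by linarith)]; simp
  filter_upwards [ae_all_iff.2 h] with t ht
  obtain ⟨n, hn⟩ := exists_nat_gt t
  exact ht n hn

end Limits

lemma E1_eq {u : ℝ} (hu : 0 < u) : E1 u = (UU 0 u).toReal := by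
  unfold E1
  rw [integral_eq_lintegral_of_nonneg_ae, UU_pos hu]
  · congr 1
    refine setLIntegral_congr_fun measurableSet_Ioi fun v hv => ?_
    congr 1
    rw [zero_sub, Real.rpow_neg_one]
    ring
  · filter_upwards [ae_restrict_mem measurableSet_Ioi] with v hv
    have : 0 < v := hu.trans hv
    simp only [Pi.zero_apply]
    positivity
  · exact Measurable.aestronglyMeasurable (by fun_prop)

lemma Ffun_eq {t : ℝ} (ht : 0 < t) : Ffun t = (FE t).toReal := by
  unfold Ffun
  rw [integral_eq_lintegral_of_nonneg_ae]
  · rw [← ENNReal.toReal_ofReal (Real.exp_nonneg (-t)), ← ENNReal.toReal_mul,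
      ← lintegral_mul_const' _ _ ENNReal.ofReal_ne_top, FE, ← lintegral_indicator measurableSet_Ioi]
    congr 1
    refine lintegral_congr fun s => ?_
    by_cases hs : 0 < s
    · rw [indicator_of_mem (by exact hs), GG_of_pos hs ht, ← ENNReal.ofReal_mul]
      · congr 1; ring
      · have := Real.Gamma_pos_of_pos hs
        positivity
    · rw [indicator_of_notMem (by exact hs), GG_nonpos_left (not_lt.1 hs)]
  · filter_upwards [ae_restrict_mem measurableSet_Ioi] with s hs
    have := Real.Gamma_pos_of_pos hs
    simp only [Pi.zero_apply]
    positivity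
  · refine ContinuousOn.aestronglyMeasurable ?_ measurableSet_Ioi
    refine ContinuousOn.div ?_ Real.differentiableOn_Gamma_Ioi.continuousOn ?_
    · exact Continuous.continuousOn
        (Continuous.rpow continuous_const (by fun_prop) (fun _ => Or.inl ht.ne'))
    · intro s hs
      exact (Real.Gamma_pos_of_pos hs).ne'

/-- truncated kernel of type (I) -/
def KF (α t : ℝ) : ℝ := (Iio (1:ℝ)).indicator (fun t => (FE (t / α)).toReal) t

/-- kernel of type (II) -/
def KE (α t : ℝ) : ℝ := (1 / α) * (UU 0 (t / α)).toReal

lemma KF_nonpos {α t : ℝ} (hα : 0 < α) (ht : t ≤ 0) : KF α t = 0 := by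
  unfold KF
  rw [indicator_of_mem (by simp only [mem_Iio]; linarith),
    FE_nonpos (div_nonpos_of_nonpos_of_nonneg ht hα.le)]
  simp

lemma KE_nonpos {α t : ℝ} (hα : 0 < α) (ht : t ≤ 0) : KE α t = 0 := by
  unfold KE
  rw [UU_nonpos (div_nonpos_of_nonpos_of_nonneg ht hα.le)]
  simp

lemma KF_eq {α t : ℝ} (hα : 0 < α) (ht : 0 < t) (ht1 : t < 1) : KF α t = Ffun (t / α) := by
  rw [KF, indicator_of_mem (by exact ht1), Ffun_eq (by positivity)]

lemma KE_eq {α t : ℝ} (hα : 0 < α) (ht : 0 < t) : KE α t = (1 / α) * E1 (t / α) := by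
  rw [KE, E1_eq (by positivity)]

lemma KF_int {α : ℝ} (hα : 0 < α) : Integrable (KF α) := by
  unfold KF
  rw [integrable_indicator_iff measurableSet_Iio]
  refine integrable_toReal_of_lintegral_ne_top (by fun_prop) ?_
  rw [← lintegral_indicator measurableSet_Iio,
    lint_scale _ (Measurable.indicator (by fun_prop) measurableSet_Iio) hα]
  refine (ENNReal.mul_lt_top ENNReal.ofReal_lt_top ?_).ne
  refine lt_of_eq_of_lt ?_ (FE_int (1 / α))
  rw [← lintegral_indicator measurableSet_Iio]
  refine lintegral_congr fun x => ?_
  have : α * x < 1 ↔ x < 1 / α := by rw [lt_div_iff₀ hα, mul_comm]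
  simp only [indicator, mem_Iio, this]
  rw [mul_div_cancel_left₀ _ hα.ne']

lemma KE_int {α : ℝ} (hα : 0 < α) : Integrable (KE α) := by
  unfold KE
  refine Integrable.const_mul ?_ _
  refine integrable_toReal_of_lintegral_ne_top (by fun_prop) ?_
  rw [lint_scale _ (by fun_prop) hα]
  simp_rw [mul_div_cancel_left₀ _ hα.ne']
  rw [UU_zero_int]
  simp

lemma ae_scale {α : ℝ} (hα : 0 < α) {p : ℝ → Prop} (hp : ∀ᵐ t, p t) : ∀ᵐ t, p (t / α) := by
  have h : Measure.QuasiMeasurePreserving (fun t : ℝ => α⁻¹ * t) volume volume := by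
    refine ⟨by fun_prop, ?_⟩
    rw [Real.map_volume_mul_left (inv_ne_zero hα.ne')]
    exact Measure.smul_absolutelyContinuous
  filter_upwards [h.ae hp] with t ht
  rwa [div_eq_inv_mul]

open ContinuousLinearMap in
lemma KF_KE {α : ℝ} (hα : 0 < α) :
    ∀ᵐ t, t ∈ Ioo (0:ℝ) 1 → convolution (KF α) (KE α) (mul ℝ ℝ) volume t = 1 := by
  filter_upwards [ae_scale hα conv_fin] with t ht ht01
  rw [convolution_mul]
  have hc := conv_one (div_pos ht01.1 hα) ht
  have h1 : ∀ u, KF α u * KE α (t - u) =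
      (1 / α) * (FE (u / α) * UU 0 (-(u / α) + t / α)).toReal := by
    intro u
    rcases le_or_gt t u with h | h
    · rw [KE_nonpos hα (by linarith), UU_nonpos]
      · simp
      · have := div_le_div_of_nonneg_right h hα.le
        linarith
    · rw [KF, indicator_of_mem (by simp only [mem_Iio]; linarith [ht01.2]), KE, ENNReal.toReal_mul,
        show (t - u) / α = -(u / α) + t / α by ring]
      ring
  have h2 : ∫⁻ u, FE (u / α) * UU 0 (-(u / α) + t / α) = ENNReal.ofReal α := by
    rw [lint_scale _ (by fun_prop) hα]
    simp_rw [mul_div_cancel_left₀ _ hα.ne']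
    rw [← lconvolution_def, hc, mul_one]
  simp_rw [h1]
  rw [integral_const_mul, integral_toReal (by fun_prop), h2, ENNReal.toReal_ofReal hα.le]
  · field_simp
  · refine ae_lt_top (by fun_prop) ?_
    rw [h2]; exact ENNReal.ofReal_ne_top

open ContinuousLinearMap in
lemma conv_causal {K g : ℝ → ℝ} (hK : ∀ t ≤ 0, K t = 0) (hg : ∀ t ≤ 0, g t = 0) {x : ℝ}
    (hx : 0 < x) :
    convolution K g (mul ℝ ℝ) volume x = ∫ y in (0:ℝ)..x, K (x - y) * g y := by
  rw [convolution_mul_swap, intervalIntegral.integral_of_le hx.le]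
  refine (setIntegral_eq_integral_of_forall_compl_eq_zero fun y hy => ?_).symm
  rw [mem_Ioc, not_and_or, not_lt, not_le] at hy
  rcases hy with hy | hy
  · rw [hg y hy, mul_zero]
  · rw [hK _ (by linarith), zero_mul]

open ContinuousLinearMap in
lemma conv_causal_nonpos {K g : ℝ → ℝ} (hK : ∀ t ≤ 0, K t = 0) (hg : ∀ t ≤ 0, g t = 0) {x : ℝ}
    (hx : x ≤ 0) : convolution K g (mul ℝ ℝ) volume x = 0 := by
  rw [convolution_mul_swap]
  refine integral_eq_zero_of_ae (Filter.Eventually.of_forall fun y => ?_)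
  simp only [Pi.zero_apply]
  rcases le_or_gt y 0 with hy | hy
  · rw [hg y hy, mul_zero]
  · rw [hK _ (by linarith), zero_mul]

open ContinuousLinearMap in
lemma conv_main {K1 K2 g : ℝ → ℝ} (h1 : Integrable K1) (h2 : Integrable K2) (h3 : Integrable g)
    (z1 : ∀ t ≤ 0, K1 t = 0) (z2 : ∀ t ≤ 0, K2 t = 0) (z3 : ∀ t ≤ 0, g t = 0)
    (h : ∀ᵐ t, t ∈ Ioo (0:ℝ) 1 → convolution K1 K2 (mul ℝ ℝ) volume t = 1) :
    ∀ᵐ x, x ∈ Ioo (0:ℝ) 1 →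
      convolution K1 (convolution K2 g (mul ℝ ℝ) volume) (mul ℝ ℝ) volume x =
        ∫ y in (0:ℝ)..x, g y := by
  have a1 := h1.ae_convolution_exists (mul ℝ ℝ) h2
  have a2 := h2.norm.ae_convolution_exists (mul ℝ ℝ) h3.norm
  have a3 := h1.norm.ae_convolution_exists (mul ℝ ℝ)
    (h2.norm.integrable_convolution (mul ℝ ℝ) h3.norm)
  filter_upwards [a3] with x hx hx01
  rw [← convolution_assoc (mul ℝ ℝ) (mul ℝ ℝ) (mul ℝ ℝ) (mul ℝ ℝ)
    (fun a b c => by simp [mul_assoc]) h1.aestronglyMeasurable h2.aestronglyMeasurable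
    h3.aestronglyMeasurable a1 a2 hx]
  rw [conv_causal (fun t ht => conv_causal_nonpos z1 z2 ht) z3 hx01.1]
  refine intervalIntegral.integral_congr_ae' ?_ ?_
  · have := (Measure.measurePreserving_sub_left volume x).quasiMeasurePreserving.ae h
    filter_upwards [this, compl_mem_ae_iff.2 (measure_singleton (μ := (volume : Measure ℝ)) x)]
      with y hy hyx hy2
    have : y < x := lt_of_le_of_ne hy2.2 hyx
    rw [hy ⟨by linarith, by linarith [hy2.1, hx01.2]⟩, one_mul]
  · refine Filter.Eventually.of_forall fun y hy => ?_
    exact absurd hx01.1 (by have := hy.1.trans_le hy.2; linarith)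

lemma ioo_congr {x : ℝ} (hx : 0 < x) {g h : ℝ → ℝ} (H : ∀ y ∈ Ioo 0 x, g y = h y) :
    ∫ y in (0:ℝ)..x, g y = ∫ y in (0:ℝ)..x, h y := by
  rw [intervalIntegral.integral_of_le hx.le, intervalIntegral.integral_of_le hx.le,
    integral_Ioc_eq_integral_Ioo, integral_Ioc_eq_integral_Ioo]
  exact setIntegral_congr_fun measurableSet_Ioo H

open ContinuousLinearMap in
lemma H0_conv {α : ℝ} (hα : 0 < α) {f g : ℝ → ℝ} (hg : ∀ t ≤ 0, g t = 0)
    (H : ∀ y ∈ Ioo (0:ℝ) 1, f y = g y) {x : ℝ} (hx : x ∈ Ioo (0:ℝ) 1) :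
    H0 α f x = convolution (KF α) g (mul ℝ ℝ) volume x := by
  rw [conv_causal (fun t ht => KF_nonpos hα ht) hg hx.1, H0]
  refine ioo_congr hx.1 fun y hy => ?_
  rw [H y ⟨hy.1, hy.2.trans hx.2⟩, KF_eq hα (by linarith [hy.2]) (by linarith [hy.1, hx.2])]

open ContinuousLinearMap in
lemma S0_conv {α : ℝ} (hα : 0 < α) {f g : ℝ → ℝ} (hg : ∀ t ≤ 0, g t = 0)
    (H : ∀ y ∈ Ioo (0:ℝ) 1, f y = g y) {x : ℝ} (hx : x ∈ Ioo (0:ℝ) 1) :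
    S0 α f x = convolution (KE α) g (mul ℝ ℝ) volume x := by
  rw [conv_causal (fun t ht => KE_nonpos hα ht) hg hx.1, S0, ← intervalIntegral.integral_const_mul]
  refine ioo_congr hx.1 fun y hy => ?_
  rw [H y ⟨hy.1, hy.2.trans hx.2⟩, KE_eq hα (by linarith [hy.2])]
  ring

open ContinuousLinearMap in
lemma left_main (α : ℝ) (hα : 0 < α) (f : ℝ → ℝ) (hf : IntegrableOn f (Icc (0:ℝ) 1)) :
    ∀ᵐ x, x ∈ Ioo (0:ℝ) 1 →
      H0 α (S0 α f) x = ∫ y in (0:ℝ)..x, f y ∧ S0 α (H0 α f) x = ∫ y in (0:ℝ)..x, f y := by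
  set g : ℝ → ℝ := (Ioo (0:ℝ) 1).indicator f with hgdef
  have hg : Integrable g :=
    (integrable_indicator_iff measurableSet_Ioo).2 (hf.mono_set Ioo_subset_Icc_self)
  have zg : ∀ t ≤ 0, g t = 0 := fun t ht =>
    indicator_of_notMem (fun h => absurd h.1 (not_lt.2 ht)) _
  have eg : ∀ y ∈ Ioo (0:ℝ) 1, f y = g y := fun y hy => (indicator_of_mem hy _).symm
  have zF : ∀ t ≤ 0, KF α t = 0 := fun t ht => KF_nonpos hα ht
  have zE : ∀ t ≤ 0, KE α t = 0 := fun t ht => KE_nonpos hα ht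
  have c1 := KF_KE hα
  have c2 : ∀ᵐ t, t ∈ Ioo (0:ℝ) 1 → convolution (KE α) (KF α) (mul ℝ ℝ) volume t = 1 := by
    filter_upwards [c1] with t ht h
    rw [← ht h, convolution_mul, convolution_mul_swap]
    simp_rw [mul_comm]
  filter_upwards [conv_main (KF_int hα) (KE_int hα) hg zF zE zg c1,
    conv_main (KE_int hα) (KF_int hα) hg zE zF zg c2] with x h1 h2 hx
  have ei : ∫ y in (0:ℝ)..x, f y = ∫ y in (0:ℝ)..x, g y :=
    ioo_congr hx.1 fun y hy => eg y ⟨hy.1, hy.2.trans hx.2⟩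
  rw [ei]
  constructor
  · rw [← h1 hx]
    exact H0_conv hα (fun t ht => conv_causal_nonpos zE zg ht)
      (fun y hy => S0_conv hα zg eg hy) hx
  · rw [← h2 hx]
    exact S0_conv hα (fun t ht => conv_causal_nonpos zF zg ht)
      (fun y hy => H0_conv hα zg eg hy) hx

lemma H1_refl (α : ℝ) (f : ℝ → ℝ) (x : ℝ) : H1 α f x = H0 α (fun z => f (1 - z)) (1 - x) := by
  unfold H1 H0
  have := intervalIntegral.integral_comp_sub_left (a := 0) (b := 1 - x)
    (fun y => Ffun ((y - x) / α) * f y) 1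
  rw [sub_sub_cancel, sub_zero] at this
  rw [← this]
  congr 1
  ext z
  rw [show 1 - z - x = 1 - x - z by ring]

lemma S1_refl (α : ℝ) (f : ℝ → ℝ) (x : ℝ) : S1 α f x = S0 α (fun z => f (1 - z)) (1 - x) := by
  unfold S1 S0
  have := intervalIntegral.integral_comp_sub_left (a := 0) (b := 1 - x)
    (fun y => E1 ((y - x) / α) * f y) 1
  rw [sub_sub_cancel, sub_zero] at this
  rw [← this]
  congr 2
  ext z
  rw [show 1 - z - x = 1 - x - z by ring]

lemma ae_Icc {p : ℝ → Prop} (h : ∀ᵐ x, x ∈ Ioo (0:ℝ) 1 → p x) :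
    ∀ᵐ x ∂(volume.restrict (Icc (0:ℝ) 1)), p x := by
  rw [← Measure.restrict_congr_set (Ioo_ae_eq_Icc (μ := volume) (a := (0:ℝ)) (b := 1)),
    ae_restrict_iff' measurableSet_Ioo]
  exact h

/-- for `α > 0` and `f ∈ L¹([0,1])`,
`H_0^α(S_0^α f) = S_0^α(H_0^α f) = ∫_0^x f` and `H_1^α(S_1^α f) = S_1^α(H_1^α f) = ∫_x^1 f`
a.e. on `[0,1]`. -/
theorem stmt16 (α : ℝ) (hα : 0 < α) (f : ℝ → ℝ) (hf : IntegrableOn f (Icc (0:ℝ) 1)) :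
    (∀ᵐ x ∂(volume.restrict (Icc (0:ℝ) 1)),
      H0 α (S0 α f) x = ∫ y in (0:ℝ)..x, f y ∧ S0 α (H0 α f) x = ∫ y in (0:ℝ)..x, f y) ∧
    (∀ᵐ x ∂(volume.restrict (Icc (0:ℝ) 1)),
      H1 α (S1 α f) x = ∫ y in x..(1:ℝ), f y ∧ S1 α (H1 α f) x = ∫ y in x..(1:ℝ), f y) := by
  refine ⟨ae_Icc (left_main α hα f hf), ae_Icc ?_⟩
  have hf' : IntegrableOn (fun z => f (1 - z)) (Icc (0:ℝ) 1) := by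
    have h := (Measure.measurePreserving_sub_left volume (1:ℝ)).integrableOn_comp_preimage
      (MeasurableEquiv.subLeft (1:ℝ)).measurableEmbedding (f := f) (s := Icc 0 1)
    rw [← h] at hf
    have hs : (fun z : ℝ => 1 - z) ⁻¹' Icc 0 1 = Icc 0 1 := by
      ext z
      simp only [mem_Icc, mem_preimage]
      constructor <;> rintro ⟨h1, h2⟩ <;> constructor <;> linarith
    rw [hs] at hf
    exact hf
  have := (Measure.measurePreserving_sub_left volume (1:ℝ)).quasiMeasurePreserving.ae
    (left_main α hα _ hf')
  filter_upwards [this] with x hx hx01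
  obtain ⟨h1, h2⟩ := hx ⟨by linarith [hx01.2], by linarith [hx01.1]⟩
  have ei : ∫ y in (0:ℝ)..(1 - x), f (1 - y) = ∫ y in x..(1:ℝ), f y := by
    rw [intervalIntegral.integral_comp_sub_left (fun y => f y) 1, sub_sub_cancel, sub_zero]
  rw [ei] at h1 h2
  constructor
  · rw [← h1, H1_refl]
    congr 1
    ext z
    rw [S1_refl, sub_sub_cancel]
  · rw [← h2, S1_refl]
    congr 1
    ext z
    rw [H1_refl, sub_sub_cancel]

end
end

section
/- Let θ > 1 and let f : [0,1] → ℝ be absolutely continuous, i.e. f(x) = f(0) + ∫_0^x g(y) dy for all x ∈ [0,1] for some g ∈ L¹([0,1];ℝ). Then, with X = x/(θ−1), for a.e. x ∈ [0,1] one has (S_0^{θ−1} f)(x) = f(0)·[X E₁(X) − e^{−X} + 1] + ∫_0^x (S_0^{θ−1} g)(y) dy; consequently S_0^{θ−1} f has an absolutely continuous representative whose derivative satisfies, for a.e. x ∈ [0,1], (D_0^θ f)(x) = f(0) · (1/(θ−1)) E₁(x/(θ−1)) + ∫_0^x (1/(θ−1)) E₁((x−y)/(θ−1)) g(y) dy.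 -/
open MeasureTheory Set

noncomputable section

open Filter Topology Convolution in
lemma E1_integrableOn {x : ℝ} (hx : 0 < x) :
    IntegrableOn (fun t : ℝ => Real.exp (-t) / t) (Ioi x) := by
  have h := (integrableOn_exp_neg_Ioi x).const_mul (1 / x)
  refine Integrable.mono' h ?_ ?_
  · refine (ContinuousOn.div (by fun_prop) (by fun_prop) ?_).aestronglyMeasurable measurableSet_Ioi
    intro t ht
    exact (hx.trans ht).ne'
  · filter_upwards [ae_restrict_mem measurableSet_Ioi] with t ht
    have ht0 : 0 < t := hx.trans ht
    have : 1 / t ≤ 1 / x := one_div_le_one_div_of_le hx (le_of_lt ht)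
    rw [Real.norm_of_nonneg (by positivity), div_eq_mul_one_div, mul_comm]
    exact mul_le_mul_of_nonneg_right this (Real.exp_pos _).le

lemma E1_nonneg {x : ℝ} (hx : 0 < x) : 0 ≤ E1 x :=
  setIntegral_nonneg measurableSet_Ioi fun t ht =>
    div_nonneg (Real.exp_pos _).le (hx.trans ht).le

lemma E1_hasDerivAt {x : ℝ} (hx : 0 < x) : HasDerivAt E1 (-(Real.exp (-x) / x)) x := by
  have h1 : HasDerivAt (fun u => ∫ t in x..u, Real.exp (-t) / t) (Real.exp (-x) / x) x := by
    refine intervalIntegral.integral_hasDerivAt_right (by simp) ?_ ?_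
    · refine ContinuousOn.stronglyMeasurableAtFilter (s := Ioi 0) isOpen_Ioi ?_ x hx
      exact ContinuousOn.div (by fun_prop) (by fun_prop) fun t ht => (ne_of_gt ht)
    · exact ContinuousAt.div (by fun_prop) (by fun_prop) hx.ne'
  have h2 := h1.const_sub (E1 x)
  refine h2.congr_of_eventuallyEq ?_
  filter_upwards [lt_mem_nhds hx] with u hu
  have := intervalIntegral.integral_interval_add_Ioi (E1_integrableOn hx) (E1_integrableOn hu)
  unfold E1
  linarith

open Filter Topology in
lemma mul_E1_tendsto : Tendsto (fun x => x * E1 x) (𝓝[>] 0) (𝓝 0) := by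
  have key : Tendsto (fun x : ℝ => ∫ t in Ioi (0:ℝ),
      (Ioi x).indicator (fun t => x * (Real.exp (-t) / t)) t) (𝓝[>] 0)
      (𝓝 (∫ t in Ioi (0:ℝ), (0:ℝ))) := by
    refine tendsto_integral_filter_of_dominated_convergence (fun t => Real.exp (-t)) ?_ ?_
      (integrableOn_exp_neg_Ioi 0) ?_
    · refine Eventually.of_forall fun x => ?_
      refine Measurable.aestronglyMeasurable ?_
      exact Measurable.indicator (by fun_prop) measurableSet_Ioi
    · filter_upwards [self_mem_nhdsWithin] with x hx
      filter_upwards [ae_restrict_mem measurableSet_Ioi] with t ht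
      by_cases h : t ∈ Ioi x
      · rw [indicator_of_mem h]
        have hx' : 0 < x := hx
        have ht' : 0 < t := ht
        rw [Real.norm_of_nonneg (by positivity)]
        have h1 : x * (Real.exp (-t) / t) = (x / t) * Real.exp (-t) := by ring
        rw [h1]
        have h2 : x / t ≤ 1 := (div_le_one ht').2 (le_of_lt h)
        have := mul_le_mul_of_nonneg_right h2 (Real.exp_pos (-t)).le
        linarith
      · rw [indicator_of_notMem h]
        simpa using (Real.exp_pos (-t)).le
    · filter_upwards [ae_restrict_mem measurableSet_Ioi] with t ht
      have h1 : Tendsto (fun x : ℝ => x * (Real.exp (-t) / t)) (𝓝[>] 0) (𝓝 0) := by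
        have : Tendsto (fun x : ℝ => x * (Real.exp (-t) / t)) (𝓝 0)
            (𝓝 (0 * (Real.exp (-t) / t))) := tendsto_id.mul_const _
        rw [zero_mul] at this
        exact this.mono_left nhdsWithin_le_nhds
      refine h1.congr' ?_
      have : ∀ᶠ x : ℝ in 𝓝[>] 0, x < t := nhdsWithin_le_nhds (gt_mem_nhds ht)
      filter_upwards [this] with x hx
      rw [indicator_of_mem (show t ∈ Ioi x from hx)]
  simp only [integral_zero] at key
  refine key.congr' ?_
  filter_upwards [self_mem_nhdsWithin] with x hx
  have hx' : (0:ℝ) < x := hx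
  rw [setIntegral_indicator measurableSet_Ioi,
    inter_eq_right.2 (Ioi_subset_Ioi hx'.le), E1, integral_const_mul]

/-- the primitive of the kernel. -/
def PK (a t : ℝ) : ℝ := (t / a) * E1 (t / a) - Real.exp (-(t / a)) + 1

lemma PK_hasDerivAt {a t : ℝ} (ha : 0 < a) (ht : 0 < t) :
    HasDerivAt (PK a) ((1 / a) * E1 (t / a)) t := by
  have hd : HasDerivAt (fun t : ℝ => t / a) (1 / a) t := (hasDerivAt_id t).div_const a
  have hp : 0 < t / a := div_pos ht ha
  have hE : HasDerivAt (fun t => E1 (t / a)) _ t := HasDerivAt.comp (h₂ := E1) t (E1_hasDerivAt hp) hd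
  have he : HasDerivAt (fun t => Real.exp (-(t / a))) _ t := hd.neg.exp
  have h := ((hd.mul hE).sub he).add_const 1
  refine HasDerivAt.congr_deriv (f := PK a) h ?_
  simp only [Pi.neg_apply]
  field_simp
  ring

lemma PK_zero (a : ℝ) : PK a 0 = 0 := by simp [PK]

open Filter Topology in
lemma PK_continuousOn {a : ℝ} (ha : 0 < a) (b : ℝ) : ContinuousOn (PK a) (Icc 0 b) := by
  intro t ht
  rcases eq_or_lt_of_le ht.1 with h | h
  · subst h
    have h0 : ContinuousWithinAt (PK a) (Ioi 0) 0 := by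
      have h1 : Tendsto (fun t : ℝ => t / a) (𝓝[>] 0) (𝓝[>] 0) := by
        refine tendsto_nhdsWithin_iff.2 ⟨?_, ?_⟩
        · have : Tendsto (fun t : ℝ => t / a) (𝓝 0) (𝓝 (0 / a)) := tendsto_id.div_const a
          rw [zero_div] at this
          exact this.mono_left nhdsWithin_le_nhds
        · filter_upwards [self_mem_nhdsWithin] with t ht
          exact div_pos ht ha
      have h2 := mul_E1_tendsto.comp h1
      have h3 : Tendsto (fun t : ℝ => Real.exp (-(t / a))) (𝓝[>] 0) (𝓝 1) := by
        have : ContinuousAt (fun t : ℝ => Real.exp (-(t / a))) 0 := by fun_prop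
        have := this.tendsto
        simp only [zero_div, neg_zero, Real.exp_zero] at this
        exact this.mono_left nhdsWithin_le_nhds
      have h4 := (h2.sub h3).add_const 1
      unfold ContinuousWithinAt
      rw [PK_zero]
      rw [show (0:ℝ) - 1 + 1 = 0 by norm_num] at h4
      exact h4
    have h5 : ContinuousWithinAt (PK a) (Ici 0) 0 := continuousWithinAt_Ioi_iff_Ici.1 h0
    exact h5.mono fun y hy => hy.1
  · exact (PK_hasDerivAt ha h).continuousAt.continuousWithinAt

lemma kernel_integrableOn {a b : ℝ} (ha : 0 < a) :
    IntegrableOn (fun t => (1 / a) * E1 (t / a)) (Ioc 0 b) := by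
  refine intervalIntegral.integrableOn_deriv_of_nonneg (g := PK a) (PK_continuousOn ha b)
    (fun t ht => PK_hasDerivAt ha ht.1) fun t ht => ?_
  have := E1_nonneg (div_pos ht.1 ha)
  positivity

lemma kernel_integral {a b : ℝ} (ha : 0 < a) (hb : 0 ≤ b) :
    ∫ t in (0:ℝ)..b, (1 / a) * E1 (t / a) = PK a b := by
  rw [intervalIntegral.integral_eq_sub_of_hasDerivAt_of_le hb (PK_continuousOn ha b)
    (fun t ht => PK_hasDerivAt ha ht.1)
    ((intervalIntegrable_iff_integrableOn_Ioc_of_le hb).2 (kernel_integrableOn ha)), PK_zero,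
    sub_zero]

open Convolution in
lemma conv_half {A B : ℝ → ℝ} (hA : ∀ x ≤ 0, A x = 0) (hB : ∀ x ≤ 0, B x = 0) {x : ℝ}
    (hx : 0 ≤ x) :
    (A ⋆[ContinuousLinearMap.mul ℝ ℝ] B) x = ∫ y in (0:ℝ)..x, A (x - y) * B y := by
  rw [convolution_mul_swap, intervalIntegral.integral_of_le hx,
    ← integral_indicator measurableSet_Ioc]
  congr 1
  ext y
  by_cases h : y ∈ Ioc 0 x
  · rw [indicator_of_mem h]
  · rw [indicator_of_notMem h]
    by_cases h0 : y ≤ 0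
    · rw [hB y h0, mul_zero]
    · rw [hA (x - y), zero_mul]
      by_contra h1
      exact h ⟨by linarith, by linarith⟩

open Convolution in
lemma conv_half_zero {A B : ℝ → ℝ} (hA : ∀ x ≤ 0, A x = 0) (hB : ∀ x ≤ 0, B x = 0) :
    ∀ x ≤ 0, (A ⋆[ContinuousLinearMap.mul ℝ ℝ] B) x = 0 := by
  intro x hx
  rw [convolution_mul_swap]
  refine integral_eq_zero_of_ae (Filter.Eventually.of_forall fun y => ?_)
  show A (x - y) * B y = 0
  by_cases h0 : y ≤ 0
  · rw [hB y h0, mul_zero]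
  · rw [hA (x - y) (by linarith), zero_mul]

open Convolution in
lemma conv_assoc_ae {A B C : ℝ → ℝ} (hA : Integrable A) (hB : Integrable B) (hC : Integrable C) :
    ∀ᵐ x, ((A ⋆[ContinuousLinearMap.mul ℝ ℝ] B) ⋆[ContinuousLinearMap.mul ℝ ℝ] C) x =
      (A ⋆[ContinuousLinearMap.mul ℝ ℝ] (B ⋆[ContinuousLinearMap.mul ℝ ℝ] C)) x := by
  have h := hB.norm.integrable_convolution (ContinuousLinearMap.mul ℝ ℝ) hC.norm
  filter_upwards [hA.norm.ae_convolution_exists (ContinuousLinearMap.mul ℝ ℝ) h] with x hx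
  refine convolution_assoc _ _ _ _ ?_ hA.aestronglyMeasurable hB.aestronglyMeasurable
    hC.aestronglyMeasurable (hA.ae_convolution_exists _ hB)
    (hB.norm.ae_convolution_exists _ hC.norm) hx
  intro x y z
  simp [mul_assoc]

open Convolution in
/-- let `θ > 1` and let `f` be absolutely continuous on `[0,1]`, say
`f(x) = f(0) + ∫_0^x g(y) dy` with `g ∈ L¹([0,1])`. Then, with `X = x/(θ−1)`, a.e. on `[0,1]`
`(S_0^{θ−1} f)(x) = f(0)[X E₁(X) − e^{−X} + 1] + ∫_0^x (S_0^{θ−1} g)(y) dy`; so the function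
`Φ(x) = f(0)[X E₁(X) − e^{−X} + 1] + ∫_0^x (S_0^{θ−1} g)(y) dy` is an absolutely continuous
representative of `S_0^{θ−1} f` and for a.e. `x ∈ [0,1]`,
`(D_0^θ f)(x) = Φ'(x) = f(0) (1/(θ−1)) E₁(x/(θ−1)) + ∫_0^x (1/(θ−1)) E₁((x−y)/(θ−1)) g(y) dy`. -/
theorem stmt18 (θ : ℝ) (hθ : 1 < θ) (f g : ℝ → ℝ) (hg : IntegrableOn g (Icc (0:ℝ) 1))
    (hf : ∀ x ∈ Icc (0:ℝ) 1, f x = f 0 + ∫ y in (0:ℝ)..x, g y) :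
    (∀ᵐ x ∂(volume.restrict (Icc (0:ℝ) 1)),
      S0 (θ - 1) f x =
        f 0 * ((x / (θ - 1)) * E1 (x / (θ - 1)) - Real.exp (-(x / (θ - 1))) + 1) +
          ∫ y in (0:ℝ)..x, S0 (θ - 1) g y) ∧
    (∀ᵐ x ∂(volume.restrict (Icc (0:ℝ) 1)),
      HasDerivAt
        (fun t => f 0 * ((t / (θ - 1)) * E1 (t / (θ - 1)) - Real.exp (-(t / (θ - 1))) + 1) +
          ∫ y in (0:ℝ)..t, S0 (θ - 1) g y)
        (f 0 * ((1 / (θ - 1)) * E1 (x / (θ - 1))) +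
          ∫ y in (0:ℝ)..x, (1 / (θ - 1)) * E1 ((x - y) / (θ - 1)) * g y) x) := by
  have ha : 0 < θ - 1 := by linarith
  set a := θ - 1 with ha_def
  set L := ContinuousLinearMap.mul ℝ ℝ with hL
  set K : ℝ → ℝ := (Ioc (0:ℝ) 1).indicator (fun t => (1 / a) * E1 (t / a)) with hK
  set G : ℝ → ℝ := (Ioc (0:ℝ) 1).indicator g with hG
  set H : ℝ → ℝ := (Ioc (0:ℝ) 1).indicator (fun _ => 1) with hH
  have zero_of : ∀ u : ℝ → ℝ, ∀ x ≤ 0, (Ioc (0:ℝ) 1).indicator u x = 0 := fun u x hx =>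
    indicator_of_notMem (fun h => absurd h.1 (not_lt.2 hx)) u
  have iK : Integrable K := (integrable_indicator_iff measurableSet_Ioc).2 (kernel_integrableOn ha)
  have iG : Integrable G :=
    (integrable_indicator_iff measurableSet_Ioc).2 (hg.mono_set Ioc_subset_Icc_self)
  have iH : Integrable H := (integrable_indicator_iff measurableSet_Ioc).2 (by simp)
  -- values of the kernel inside the interval, a.e.
  have ae_ne : ∀ x : ℝ, ∀ᵐ y : ℝ, y ≠ x := fun x => by simp [ae_iff, measure_singleton]
  have hKx : ∀ u : ℝ → ℝ, ∀ x ∈ Icc (0:ℝ) 1,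
      ∫ y in (0:ℝ)..x, K (x - y) * u y = ∫ y in (0:ℝ)..x, (1 / a) * E1 ((x - y) / a) * u y := by
    intro u x hx
    refine intervalIntegral.integral_congr_ae ?_
    filter_upwards [ae_ne x] with y hy hy'
    rw [uIoc_of_le hx.1] at hy'
    have : y < x := lt_of_le_of_ne hy'.2 hy
    rw [hK, indicator_of_mem]
    exact ⟨by linarith, by linarith [hx.2, hy'.1]⟩
  have hS : ∀ u : ℝ → ℝ, ∀ x : ℝ,
      S0 a u x = ∫ y in (0:ℝ)..x, (1 / a) * E1 ((x - y) / a) * u y := by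
    intro u x
    rw [S0, ← intervalIntegral.integral_const_mul]
    simp only [mul_assoc]
  have hKG : ∀ x ∈ Icc (0:ℝ) 1, (K ⋆[L] G) x = S0 a g x := by
    intro x hx
    rw [conv_half (zero_of _) (zero_of _) hx.1, hKx G x hx, hS]
    refine intervalIntegral.integral_congr_ae ?_
    refine Filter.Eventually.of_forall fun y hy => ?_
    rw [uIoc_of_le hx.1] at hy
    rw [hG, indicator_of_mem (show y ∈ Ioc (0:ℝ) 1 from ⟨hy.1, hy.2.trans hx.2⟩)]
  have hmulH : ∀ u : ℝ → ℝ, (∀ x ≤ 0, u x = 0) → ∀ x ∈ Icc (0:ℝ) 1,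
      (u ⋆[L] H) x = ∫ y in (0:ℝ)..x, u y := by
    intro u hu x hx
    rw [conv_half hu (zero_of _) hx.1]
    trans ∫ y in (0:ℝ)..x, u (x - y)
    · refine intervalIntegral.integral_congr_ae ?_
      refine Filter.Eventually.of_forall fun y hy => ?_
      rw [uIoc_of_le hx.1] at hy
      rw [indicator_of_mem (show y ∈ Ioc (0:ℝ) 1 from ⟨hy.1, hy.2.trans hx.2⟩), mul_one]
    · simp
  have hGH : ∀ x ∈ Icc (0:ℝ) 1, (G ⋆[L] H) x = ∫ y in (0:ℝ)..x, g y := by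
    intro x hx
    rw [hmulH G (zero_of _) x hx]
    refine intervalIntegral.integral_congr_ae ?_
    refine Filter.Eventually.of_forall fun y hy => ?_
    rw [uIoc_of_le hx.1] at hy
    rw [hG, indicator_of_mem (show y ∈ Ioc (0:ℝ) 1 from ⟨hy.1, hy.2.trans hx.2⟩)]
  constructor
  · have hassoc := conv_assoc_ae iK iG iH
    filter_upwards [ae_restrict_of_ae hassoc, ae_restrict_mem measurableSet_Icc] with x h1 hx
    rw [hmulH _ (conv_half_zero (zero_of _) (zero_of _)) x hx,
      conv_half (zero_of _) (conv_half_zero (zero_of _) (zero_of _)) hx.1, hKx _ x hx] at h1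
    have e1 : ∫ y in (0:ℝ)..x, (K ⋆[L] G) y = ∫ y in (0:ℝ)..x, S0 a g y := by
      refine intervalIntegral.integral_congr fun y hy => ?_
      rw [uIcc_of_le hx.1] at hy
      exact hKG y ⟨hy.1, hy.2.trans hx.2⟩
    rw [← e1, h1, hS]
    have ik : IntervalIntegrable (fun y => (1 / a) * E1 ((x - y) / a)) volume 0 x := by
      have : IntervalIntegrable (fun y => (1 / a) * E1 (y / a)) volume 0 x :=
        (intervalIntegrable_iff_integrableOn_Ioc_of_le hx.1).2 (kernel_integrableOn ha)
      have := (this.comp_sub_left x).symm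
      simpa using this
    have hc : ContinuousOn (fun y => ∫ z in (0:ℝ)..y, g z) (uIcc 0 x) := by
      refine intervalIntegral.continuousOn_primitive_interval (hg.mono_set ?_)
      rw [uIcc_of_le hx.1]
      exact Icc_subset_Icc_right hx.2
    have e2 : ∫ y in (0:ℝ)..x, (1 / a) * E1 ((x - y) / a) * f y =
        ∫ y in (0:ℝ)..x, ((1 / a) * E1 ((x - y) / a) * f 0 +
          (1 / a) * E1 ((x - y) / a) * ∫ z in (0:ℝ)..y, g z) := by
      refine intervalIntegral.integral_congr fun y hy => ?_
      rw [uIcc_of_le hx.1] at hy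
      show (1 / a) * E1 ((x - y) / a) * f y = _
      rw [hf y ⟨hy.1, hy.2.trans hx.2⟩]
      ring
    rw [e2, intervalIntegral.integral_add (ik.mul_const _) (ik.mul_continuousOn hc)]
    congr 1
    · rw [intervalIntegral.integral_mul_const,
        intervalIntegral.integral_comp_sub_left (fun y => (1 / a) * E1 (y / a)) x, sub_self,
        sub_zero, kernel_integral ha hx.1, mul_comm, PK]
    · refine intervalIntegral.integral_congr fun y hy => ?_
      rw [uIcc_of_le hx.1] at hy
      show _ = (1 / a) * E1 ((x - y) / a) * (G ⋆[L] H) y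
      rw [hGH y ⟨hy.1, hy.2.trans hx.2⟩]
  · have iS : IntervalIntegrable (S0 a g) volume 0 1 := by
      rw [intervalIntegrable_iff_integrableOn_Ioc_of_le zero_le_one]
      have h1 : IntegrableOn (K ⋆[L] G) (Ioc 0 1) := (iK.integrable_convolution L iG).integrableOn
      exact h1.congr_fun (fun y hy => hKG y (Ioc_subset_Icc_self hy)) measurableSet_Ioc
    filter_upwards [ae_restrict_of_ae iS.ae_hasDerivAt_integral, ae_restrict_of_ae (ae_ne 0),
      ae_restrict_mem measurableSet_Icc] with x h1 h0 hx
    have hx0 : 0 < x := lt_of_le_of_ne hx.1 (Ne.symm h0)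
    rw [← hS]
    have h2 := h1 (by rwa [uIcc_of_le zero_le_one]) 0 (by simp)
    exact ((PK_hasDerivAt ha hx0).const_mul (f 0)).add h2

end
end
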